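/- For mod_{p*}-almost every S ∈ Γ* (i.e., for all S outside a subfamily whose associated measures H⌞S have zero p*-modulus), cap_p T ≤ C(T) ∫_S ρ₀^{p−1} dH, where ρ₀ is the minimizer of cap_p T and C(T) depends only on the data of T. Consequently, if cap_p T > 0, the function (C(T)/cap_p T) ρ₀^{p−1} is weakly admissible for mod_{p*} T. -/

import Mathlib

open MeasureTheory Metric Set Filter Topology
open scoped ENNReal NNReal unitInterval

noncomputable section

namespace Duality

/-! ### Rectifiable curves, line integrals and upper gradients

A rectifiable path is encoded by its arclength-type parametrization: a `1`-Lipschitz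
map defined on a compact interval `[a, b]`.  The line integral `∫_γ ρ ds` of a
nonnegative Borel function is then the Lebesgue integral of `ρ ∘ γ` over `[a, b]`. -/

structure UPath (X : Type*) [PseudoMetricSpace X] where
  a : ℝ
  b : ℝ
  hab : a ≤ b
  toFun : ℝ → X
  lip : LipschitzOnWith 1 toFun (Set.Icc a b)

namespace UPath

variable {X : Type*} [PseudoMetricSpace X]

/-- starting point of the path -/
def start (γ : UPath X) : X := γ.toFun γ.a

/-- end point of the path -/
def finish (γ : UPath X) : X := γ.toFun γ.b

/-- The line integral `∫_γ ρ ds`. -/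
def integral (γ : UPath X) (ρ : X → ℝ≥0∞) : ℝ≥0∞ :=
  ∫⁻ t in Set.Icc γ.a γ.b, ρ (γ.toFun t)

/-- The image (trace) `|γ|` of the path. -/
def trace (γ : UPath X) : Set X := γ.toFun '' Set.Icc γ.a γ.b

/-- The length of the path. -/
def length (γ : UPath X) : ℝ≥0∞ := eVariationOn γ.toFun (Set.Icc γ.a γ.b)

/-- The path stays inside the set `W`. -/
def InSet (γ : UPath X) (W : Set X) : Prop := ∀ t ∈ Set.Icc γ.a γ.b, γ.toFun t ∈ W

/-- The reparametrization of a rectifiable path as a `Path` (continuous map from `[0,1]`). -/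
def toPath (γ : UPath X) : Path γ.start γ.finish where
  toFun := fun t => γ.toFun (γ.a + (t : ℝ) * (γ.b - γ.a))
  continuous_toFun := by
    have hmem : ∀ t : unitInterval, γ.a + (t : ℝ) * (γ.b - γ.a) ∈ Set.Icc γ.a γ.b := by
      intro t
      obtain ⟨ht0, ht1⟩ := t.2
      constructor
      · nlinarith [γ.hab]
      · nlinarith [γ.hab]
    exact γ.lip.continuousOn.comp_continuous (by continuity) hmem
  source' := by simp [start]
  target' := by simp [finish]

end UPath

/-- `ρ` is an upper gradient of `u`. -/
def IsUpperGradient {X : Type*} [PseudoMetricSpace X] {Y : Type*} [PseudoEMetricSpace Y]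
    (u : X → Y) (ρ : X → ℝ≥0∞) : Prop :=
  ∀ γ : UPath X, edist (u γ.start) (u γ.finish) ≤ γ.integral ρ

/-- The `p`-modulus of a family of (rectifiable) paths. -/
def pathMod {X : Type*} [PseudoMetricSpace X] [MeasurableSpace X]
    (μ : Measure X) (p : ℝ) (Γ : Set (UPath X)) : ℝ≥0∞ :=
  ⨅ (ρ : X → ℝ≥0∞) (_ : Measurable ρ ∧ ∀ γ ∈ Γ, 1 ≤ γ.integral ρ),
    ∫⁻ x, ρ x ^ p ∂μ

/-- `ρ` is a `p`-weak upper gradient of `u`: the upper gradient inequality may fail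
only on a path family of zero `p`-modulus. -/
def IsWeakUpperGradient {X : Type*} [PseudoMetricSpace X] [MeasurableSpace X]
    {Y : Type*} [PseudoEMetricSpace Y] (μ : Measure X) (p : ℝ)
    (u : X → Y) (ρ : X → ℝ≥0∞) : Prop :=
  pathMod μ p {γ : UPath X | ¬ edist (u γ.start) (u γ.finish) ≤ γ.integral ρ} = 0

/-- `ρ` is a `p`-weak upper gradient of `u` in the subset `U`. -/
def IsWeakUpperGradientOn {X : Type*} [PseudoMetricSpace X] [MeasurableSpace X]
    {Y : Type*} [PseudoEMetricSpace Y] (μ : Measure X) (p : ℝ) (U : Set X)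
    (u : X → Y) (ρ : X → ℝ≥0∞) : Prop :=
  pathMod (μ.restrict U) p
    {γ : UPath X | γ.InSet U ∧ ¬ edist (u γ.start) (u γ.finish) ≤ γ.integral ρ} = 0

/-- `ρ` is the minimal `p`-weak upper gradient of `u`: it is a `p`-integrable `p`-weak
upper gradient which is `μ`-a.e. dominated by every other one. -/
def IsMinimalWeakUpperGradient {X : Type*} [PseudoMetricSpace X] [MeasurableSpace X]
    {Y : Type*} [PseudoEMetricSpace Y] (μ : Measure X) (p : ℝ)
    (u : X → Y) (ρ : X → ℝ≥0∞) : Prop :=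
  Measurable ρ ∧ IsWeakUpperGradient μ p u ρ ∧ (∫⁻ x, ρ x ^ p ∂μ) < ⊤ ∧
    ∀ ρ' : X → ℝ≥0∞, Measurable ρ' → IsWeakUpperGradient μ p u ρ' →
      (∫⁻ x, ρ' x ^ p ∂μ) < ⊤ → ∀ᵐ x ∂μ, ρ x ≤ ρ' x

/-! ### Doubling measures, Poincaré inequalities, Ahlfors regularity -/

/-- `μ` is a doubling (Borel) measure with doubling constant `Cμ`:
`0 < μ(2B) ≤ Cμ · μ(B) < ∞` for every ball `B` of radius `r < diam T`. -/
def IsDoubling {X : Type*} [MetricSpace X] [MeasurableSpace X]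
    (μ : Measure X) (Cμ : ℝ≥0∞) : Prop :=
  ∀ (x : X) (r : ℝ), 0 < r → r < Metric.diam (Set.univ : Set X) →
    0 < μ (ball x (2 * r)) ∧ μ (ball x (2 * r)) ≤ Cμ * μ (ball x r) ∧
      Cμ * μ (ball x r) < ⊤

/-- `(X, d, μ)` supports a weak `1`-Poincaré inequality with constants `CP`, `lP`:
`⨍_B |u - u_B| dμ ≤ CP · diam B · ⨍_{lP·B} ρ dμ` for every locally integrable `u`
and every upper gradient `ρ` of `u`, and balls have positive finite measure. -/
def SupportsPoincare {X : Type*} [MetricSpace X] [MeasurableSpace X]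
    (μ : Measure X) (CP lP : ℝ) : Prop :=
  (∀ (x : X) (r : ℝ), 0 < r → 0 < μ (ball x r) ∧ μ (ball x r) < ⊤) ∧
  ∀ (u : X → ℝ) (ρ : X → ℝ≥0∞), LocallyIntegrable u μ → Measurable ρ →
    IsUpperGradient u ρ → ∀ (x : X) (r : ℝ), 0 < r →
      (∫⁻ y in ball x r, ENNReal.ofReal |u y - ⨍ z in ball x r, u z ∂μ| ∂μ) /
          μ (ball x r) ≤
        ENNReal.ofReal (CP * Metric.diam (ball x r)) *
          ((∫⁻ y in ball x (lP * r), ρ y ∂μ) / μ (ball x (lP * r)))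

/-- `μ` is Ahlfors `q`-regular with constants `0 < aA ≤ AA`. -/
def IsAhlforsRegular {X : Type*} [MetricSpace X] [MeasurableSpace X]
    (μ : Measure X) (q aA AA : ℝ) : Prop :=
  0 < aA ∧ aA ≤ AA ∧
    ∀ (x : X) (r : ℝ), 0 < r → r < Metric.diam (Set.univ : Set X) →
      ENNReal.ofReal (aA * r ^ q) ≤ μ (ball x r) ∧
        μ (ball x r) ≤ ENNReal.ofReal (AA * r ^ q)

/-! ### The circle `ℝ/ℤ`, loops and degree -/

lemma intCast_coe_eq_zero (k : ℤ) : ((k : ℝ) : UnitAddCircle) = 0 :=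
  (AddCircle.coe_eq_zero_iff _).mpr ⟨k, by simp⟩

/-- The standard loop of degree `k` in `ℝ/ℤ` based at `y`: `t ↦ y + [k t]`. -/
def stdLoop (k : ℤ) (y : UnitAddCircle) : Path y y where
  toFun := fun t => y + (((k : ℝ) * (t : ℝ) : ℝ) : UnitAddCircle)
  continuous_toFun := by
    refine continuous_const.add ?_
    exact (AddCircle.continuous_mk' 1).comp (by continuity)
  source' := by simp
  target' := by
    have h1 : ((1 : unitInterval) : ℝ) = 1 := rfl
    have h : (((k : ℝ) * ((1 : unitInterval) : ℝ) : ℝ) : UnitAddCircle) = 0 := by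
      rw [h1, mul_one]; exact intCast_coe_eq_zero k
    simp [h]

/-- Concatenation of `n` copies of a loop. -/
def loopPow {X : Type*} [TopologicalSpace X] {x : X} (γ : Path x x) : ℕ → Path x x
  | 0 => Path.refl x
  | n + 1 => (loopPow γ n).trans γ

/-- A loop `γ` based at `x` has degree 1 (relative to the chosen generator `α₀` based
at `x₀`) if it is loop-homotopic to a conjugate `η * α₀ * η⁻¹` of `α₀`. -/
def IsDegreeOneLoop {T : Type*} [TopologicalSpace T] (x₀ : T) (α₀ : Path x₀ x₀)
    {x : T} (γ : Path x x) : Prop :=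
  ∃ η : Path x x₀, Path.Homotopic γ (η.trans (α₀.trans η.symm))

/-- A map `f : T → ℝ/ℤ` has degree `k`: it pushes every degree-1 loop based at `x`
to a loop which is loop-homotopic to `[f x] + k·β`, `β (t) = [t]`. -/
def HasDegree {T : Type*} [TopologicalSpace T] (x₀ : T) (α₀ : Path x₀ x₀)
    (f : T → UnitAddCircle) (k : ℤ) : Prop :=
  ∃ hf : Continuous f, ∀ (x : T) (γ : Path x x), IsDegreeOneLoop x₀ α₀ γ →
    Path.Homotopic (γ.map hf) (stdLoop k (f x))

/-- The class of `α₀` generates `π₁(T, x₀) ≅ ℤ`. -/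
def IsGenerator {T : Type*} [TopologicalSpace T] (x₀ : T) (α₀ : Path x₀ x₀) : Prop :=
  Function.Bijective fun k : ℤ =>
    (FundamentalGroup.fromPath (X := TopCat.of T) ⟦α₀⟧ : FundamentalGroup (TopCat.of T) x₀) ^ k

/-- `T` is semilocally simply connected. -/
def SemilocallySimplyConnected (T : Type*) [TopologicalSpace T] : Prop :=
  ∀ x : T, ∃ U ∈ 𝓝 x, ∀ γ : Path x x, (∀ t, γ t ∈ U) → Path.Homotopic γ (Path.refl x)

/-- `f` is a Lipschitz map of degree 1. -/
def DegOneLip {T : Type*} [MetricSpace T] (x₀ : T) (α₀ : Path x₀ x₀)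
    (f : T → UnitAddCircle) : Prop :=
  (∃ L : ℝ≥0, LipschitzWith L f) ∧ HasDegree x₀ α₀ f 1

/-! ### Capacity and surface modulus -/

/-- The degree 1 `p`-capacity of `T`, defined through minimal `p`-weak upper gradients:
the infimum of `∫ ρ^p dμ` over `p`-weak upper gradients `ρ` of Lipschitz degree-1 maps. -/
def cap {T : Type*} [MetricSpace T] [MeasurableSpace T] (μ : Measure T) (p : ℝ)
    (x₀ : T) (α₀ : Path x₀ x₀) : ℝ≥0∞ :=
  ⨅ (f : T → UnitAddCircle) (_ : DegOneLip x₀ α₀ f) (ρ : T → ℝ≥0∞)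
    (_ : Measurable ρ ∧ IsWeakUpperGradient μ p f ρ),
      ∫⁻ x, ρ x ^ p ∂μ

/-- The pointwise Lipschitz constant `Lip f (x)`. -/
def pLip {T : Type*} [MetricSpace T] (f : T → UnitAddCircle) (x : T) : ℝ≥0∞ :=
  Filter.limsup
    (fun r : ℝ => ⨆ y ∈ ball x r, edist (f x) (f y) / ENNReal.ofReal r) (𝓝[>] (0 : ℝ))

/-- The degree 1 `p`-capacity of `T`, defined through pointwise Lipschitz constants. -/
def capLip {T : Type*} [MetricSpace T] [MeasurableSpace T] (μ : Measure T) (p : ℝ)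
    (x₀ : T) (α₀ : Path x₀ x₀) : ℝ≥0∞ :=
  ⨅ (f : T → UnitAddCircle) (_ : DegOneLip x₀ α₀ f), ∫⁻ x, pLip f x ^ p ∂μ

/-- The codimension 1 spherical Hausdorff measure, as a set function:
`H(A) = sup_{δ>0} inf { ∑ μ(B_i)/r_i }`, the infimum being over countable covers of `A`
by balls `B_i` of radii `r_i ≤ δ`. -/
def codimH {T : Type*} [MetricSpace T] [MeasurableSpace T] (μ : Measure T)
    (A : Set T) : ℝ≥0∞ :=
  ⨆ (δ : ℝ) (_ : 0 < δ),
    ⨅ (c : ℕ → T) (r : ℕ → ℝ) (_ : ∀ i, r i ≤ δ)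
      (_ : A ⊆ ⋃ i, ball (c i) (r i)),
        ∑' i, μ (ball (c i) (r i)) / ENNReal.ofReal (r i)

/-- The integral `∫_S g dH` of `g ≥ 0` over `S` against the codimension 1 Hausdorff
measure, via the layer-cake (Choquet) formula. -/
def choquetIntegral {T : Type*} [MetricSpace T] [MeasurableSpace T] (μ : Measure T)
    (S : Set T) (g : T → ℝ≥0∞) : ℝ≥0∞ :=
  ∫⁻ t in Set.Ioi (0 : ℝ), codimH μ {x | x ∈ S ∧ ENNReal.ofReal t < g x}

/-- The family `Γ*` of all level sets `φ⁻¹[0]` of finite codimension 1 Hausdorff measure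
of continuous degree-1 maps `φ : T → ℝ/ℤ`. -/
def Surfaces {T : Type*} [MetricSpace T] [MeasurableSpace T] (μ : Measure T)
    (x₀ : T) (α₀ : Path x₀ x₀) : Set (Set T) :=
  {S | ∃ φ : T → UnitAddCircle, HasDegree x₀ α₀ φ 1 ∧ S = φ ⁻¹' {0} ∧ codimH μ S < ⊤}

/-- The surface `q`-modulus of a family of surfaces, the surfaces being equipped with the
codimension 1 Hausdorff measure. -/
def surfModOf {T : Type*} [MetricSpace T] [MeasurableSpace T] (μ : Measure T) (q : ℝ)
    (𝒮 : Set (Set T)) : ℝ≥0∞ :=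
  ⨅ (ρ : T → ℝ≥0∞) (_ : Measurable ρ ∧ ∀ S ∈ 𝒮, 1 ≤ choquetIntegral μ S ρ),
    ∫⁻ x, ρ x ^ q ∂μ

/-- The surface modulus `mod_q T`. -/
def surfMod {T : Type*} [MetricSpace T] [MeasurableSpace T] (μ : Measure T) (q : ℝ)
    (x₀ : T) (α₀ : Path x₀ x₀) : ℝ≥0∞ :=
  surfModOf μ q (Surfaces μ x₀ α₀)

/-- The family `Γ*` with the `(q-1)`-dimensional Hausdorff measure instead. -/
def SurfacesH {T : Type*} [MetricSpace T] [MeasurableSpace T] [BorelSpace T] (q : ℝ)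
    (x₀ : T) (α₀ : Path x₀ x₀) : Set (Set T) :=
  {S | ∃ φ : T → UnitAddCircle, HasDegree x₀ α₀ φ 1 ∧ S = φ ⁻¹' {0} ∧ μH[q - 1] S < ⊤}

/-- The surface modulus `mod_q T` defined through the `(q-1)`-dimensional Hausdorff
measures `H^{q-1} ⌞ S`, `S ∈ Γ*`. -/
def surfModH {T : Type*} [MetricSpace T] [MeasurableSpace T] [BorelSpace T]
    (μ : Measure T) (q pstar : ℝ) (x₀ : T) (α₀ : Path x₀ x₀) : ℝ≥0∞ :=
  ⨅ (ρ : T → ℝ≥0∞)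
    (_ : Measurable ρ ∧ ∀ S ∈ SurfacesH (T := T) q x₀ α₀, 1 ≤ ∫⁻ x in S, ρ x ∂μH[q - 1]),
      ∫⁻ x, ρ x ^ pstar ∂μ

/-- The standing assumptions 2.1. -/
def Standing {T : Type*} [MetricSpace T] [MeasurableSpace T] (μ : Measure T)
    (Cμ : ℝ≥0∞) (CP lP : ℝ) (x₀ : T) (α₀ : Path x₀ x₀) : Prop :=
  IsDoubling μ Cμ ∧ SupportsPoincare μ CP lP ∧ SemilocallySimplyConnected T ∧
    IsGenerator x₀ α₀ ∧ ∃ f : T → UnitAddCircle, DegOneLip x₀ α₀ f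

/-! ### The universal cover -/

/-- `π` is a local isometry. -/
def IsLocalIsometry {X Y : Type*} [MetricSpace X] [MetricSpace Y] (π : X → Y) : Prop :=
  ∀ x : X, ∃ ε : ℝ, 0 < ε ∧
    ∀ y ∈ ball x ε, ∀ z ∈ ball x ε, dist (π y) (π z) = dist y z

/-- `(T̃, π)` is the universal cover of `T`, with `T̃` carrying the length metric pulled
back by `π` (so that `π` is a local isometry). -/
def CoverSetup {T Tt : Type*} [MetricSpace T] [MetricSpace Tt] (π : Tt → T) : Prop :=
  IsCoveringMap π ∧ Function.Surjective π ∧ IsLocalIsometry π ∧ SimplyConnectedSpace Tt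

/-- `τ` is the deck transformation of the cover `π` determined by
`τ (γ̃ 0) = γ̃ 1` for every lift `γ̃` of every degree-1 loop `γ`. -/
def IsDeck {T Tt : Type*} [MetricSpace T] [MetricSpace Tt] (π : Tt → T)
    (x₀ : T) (α₀ : Path x₀ x₀) (τ : Tt → Tt) : Prop :=
  Continuous τ ∧ (∀ x, π (τ x) = π x) ∧
    ∀ (x : T) (γ : Path x x), IsDegreeOneLoop x₀ α₀ γ →
      ∀ γt : C(unitInterval, Tt), (∀ t, π (γt t) = γ t) → τ (γt 0) = γt 1

/-- `μ̃` is the natural lift of `μ` to the cover: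
`μ̃ (A) = ∫ #(π⁻¹(x) ∩ A) dμ (x)`. -/
def IsLiftedMeasure {T Tt : Type*} [MetricSpace T] [MeasurableSpace T]
    [MetricSpace Tt] [MeasurableSpace Tt] (π : Tt → T) (μ : Measure T)
    (μt : Measure Tt) : Prop :=
  ∀ A : Set Tt, MeasurableSet A → μt A = ∫⁻ x, ((π ⁻¹' {x} ∩ A).encard : ℝ≥0∞) ∂μ

/-! ### Newtonian spaces -/

/-- The seminorm of `N^{1,p}(U)`. -/
def NSeminorm {X : Type*} [PseudoMetricSpace X] [MeasurableSpace X] (μ : Measure X)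
    (p : ℝ) (U : Set X) (f : X → ℝ) : ℝ≥0∞ :=
  (∫⁻ x in U, ENNReal.ofReal |f x| ^ p ∂μ) ^ (1 / p) +
    ⨅ (ρ : X → ℝ≥0∞) (_ : Measurable ρ ∧ IsWeakUpperGradientOn μ p U f ρ),
      (∫⁻ x in U, ρ x ^ p ∂μ) ^ (1 / p)

/-- `f ∈ N^{1,p}_loc`. -/
def MemNloc {X : Type*} [PseudoMetricSpace X] [MeasurableSpace X] (μ : Measure X)
    (p : ℝ) (f : X → ℝ) : Prop :=
  ∀ U : Set X, IsOpen U → IsCompact (closure U) →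
    (∫⁻ x in U, ENNReal.ofReal |f x| ^ p ∂μ) < ⊤ ∧
      ∃ ρ : X → ℝ≥0∞, Measurable ρ ∧ IsWeakUpperGradientOn μ p U f ρ ∧
        (∫⁻ x in U, ρ x ^ p ∂μ) < ⊤

/-- The collection `F`: nonnegative Borel functions `ρ` on `T` such that `ρ ∘ π` is a
`p`-weak upper gradient of some `f ∈ N^{1,p}_loc (T̃)` with `f ∘ τ - f = 1` a.e. -/
def MemF {T Tt : Type*} [MetricSpace T] [MeasurableSpace T] [MetricSpace Tt]
    [MeasurableSpace Tt] (π : Tt → T) (τ : Tt → Tt) (μt : Measure Tt) (p : ℝ)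
    (ρ : T → ℝ≥0∞) : Prop :=
  Measurable ρ ∧ ∃ f : Tt → ℝ, MemNloc μt p f ∧ (∀ᵐ x ∂μt, f (τ x) - f x = 1) ∧
    IsWeakUpperGradient μt p f (ρ ∘ π)

/-- The capacity `cap_p^F T`. -/
def capF {T Tt : Type*} [MetricSpace T] [MeasurableSpace T] [MetricSpace Tt]
    [MeasurableSpace Tt] (μ : Measure T) (π : Tt → T) (τ : Tt → Tt) (μt : Measure Tt)
    (p : ℝ) : ℝ≥0∞ :=
  ⨅ (ρ : T → ℝ≥0∞) (_ : MemF π τ μt p ρ), ∫⁻ x, ρ x ^ p ∂μ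

/-! ### Miscellaneous operators -/

/-- The restricted Hardy–Littlewood maximal operator `M_R`. -/
def restrMax {T : Type*} [MetricSpace T] [MeasurableSpace T] (μ : Measure T)
    (R : ℝ≥0∞) (g : T → ℝ≥0∞) (x : T) : ℝ≥0∞ :=
  ⨆ (s : ℝ) (_ : 0 < s ∧ ENNReal.ofReal s ≤ R),
    (∫⁻ y in ball x s, g y ∂μ) / μ (ball x s)

/-- The upper Lebesgue integral. -/
def upperLintegral {Y : Type*} [MeasurableSpace Y] (ν : Measure Y)
    (F : Y → ℝ≥0∞) : ℝ≥0∞ :=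
  ⨅ (G : Y → ℝ≥0∞) (_ : Measurable G ∧ ∀ y, F y ≤ G y), ∫⁻ y, G y ∂ν

/-! ### The sets `Ω` and the functions `ψ̃`, `ζ`, `ψ` of Section 4.3 -/

/-- The set of points reachable from `A` by a rectifiable path inside `W`. -/
def reach {T : Type*} [MetricSpace T] (A W : Set T) : Set T :=
  {x | ∃ γ : UPath T, γ.start ∈ A ∧ γ.finish = x ∧ γ.InSet W}

/-- `inf_γ ∫_γ ρ ds` over rectifiable paths connecting `A` to `x` inside `W`. -/
def pathDist {T : Type*} [MetricSpace T] (ρ : T → ℝ≥0∞) (A W : Set T) (x : T) : ℝ≥0∞ :=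
  ⨅ (γ : UPath T) (_ : γ.start ∈ A ∧ γ.finish = x ∧ γ.InSet W), γ.integral ρ

open scoped Classical in
/-- The function `ψ̃`. -/
def psiTilde {T : Type*} [MetricSpace T] (ρ : T → ℝ≥0∞) (A W : Set T) (x : T) : ℝ :=
  if x ∈ reach A W then (pathDist ρ A W x).toReal else 0

/-- The function `min {1, ψ̃}`. -/
def zeta {T : Type*} [MetricSpace T] (ρ : T → ℝ≥0∞) (A W : Set T) (x : T) : ℝ :=
  min 1 (psiTilde ρ A W x)

/-- The competing admissible map `ψ = [min {1, ψ̃}] : T → ℝ/ℤ`. -/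
def psiMap {T : Type*} [MetricSpace T] (ρ : T → ℝ≥0∞) (A W : Set T) (x : T) :
    UnitAddCircle :=
  ((zeta ρ A W x : ℝ) : UnitAddCircle)

end Duality

namespace Duality

lemma lipschitzOnWith_Icc_of_eventually {F : ℝ → ℝ} {M : ℝ≥0} {a b : ℝ}
    (h : ∀ t ∈ Icc a b, ∀ᶠ s in 𝓝[Icc a b] t, |F s - F t| ≤ M * |s - t|) :
    LipschitzOnWith (M + 1) F (Icc a b) := by
  have hcont : ContinuousOn F (Icc a b) := by
    intro t ht
    have h1 : Tendsto (fun s => M * |s - t|) (𝓝[Icc a b] t) (𝓝 0) := by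
      have : Continuous fun s : ℝ => (M : ℝ) * |s - t| := by fun_prop
      simpa using (this.tendsto t).mono_left (nhdsWithin_le_nhds (s := Icc a b))
    rw [ContinuousWithinAt, tendsto_iff_dist_tendsto_zero]
    refine squeeze_zero' (Eventually.of_forall fun _ => dist_nonneg) ?_ h1
    simpa [Real.dist_eq] using h t ht
  have key : ∀ s ∈ Icc a b, ∀ t ∈ Icc a b, s ≤ t → |F t - F s| ≤ (M + 1) * |t - s| := by
    intro s hs t ht hst
    have hsub : Icc s t ⊆ Icc a b := Icc_subset_Icc hs.1 ht.2
    have := image_norm_le_of_liminf_right_slope_norm_lt_deriv_boundary (a := s) (b := t)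
      (f := fun x => F x - F s) (f' := fun _ => (M : ℝ)) (B := fun x => (M + 1) * (x - s))
      (B' := fun _ => (M : ℝ) + 1) ((hcont.mono hsub).sub continuousOn_const) ?_ (by simp)
      (by fun_prop) ?_ (fun _ _ _ => by linarith) (right_mem_Icc.2 hst)
    · simpa [abs_of_nonneg (sub_nonneg.2 hst)] using this
    · intro x hx r hr
      apply Eventually.frequently
      have hx' : x ∈ Icc a b := hsub ⟨hx.1, hx.2.le⟩
      have h2 : 𝓝[>] x ≤ 𝓝[Icc a b] x := by
        rw [← nhdsWithin_Ioc_eq_nhdsGT hx.2]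
        exact nhdsWithin_mono _ fun y hy => hsub ⟨hx.1.trans hy.1.le, hy.2⟩
      filter_upwards [h2 (h x hx'), self_mem_nhdsWithin] with z hz hxz
      have hxz : x < z := hxz
      refine lt_of_le_of_lt ?_ hr
      simp only [slope, Function.comp, vsub_eq_sub, smul_eq_mul, Real.norm_eq_abs]
      rw [inv_mul_le_iff₀ (by linarith)]
      rw [abs_of_pos (sub_pos.2 hxz)] at hz
      have := abs_sub_abs_le_abs_sub (F z - F s) (F x - F s)
      have e : F z - F s - (F x - F s) = F z - F x := by ring
      rw [e] at this
      linarith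
    · intro x _
      have := ((hasDerivAt_id x).sub_const s).const_mul ((M : ℝ) + 1)
      simpa using this.hasDerivWithinAt
  refine LipschitzOnWith.of_dist_le_mul fun s hs t ht => ?_
  rw [Real.dist_eq, Real.dist_eq]
  push_cast
  rcases le_total s t with hst | hst
  · rw [abs_sub_comm, abs_sub_comm s]; exact key s hs t ht hst
  · exact key t ht s hs hst

/-- A pointwise derivative bound along an interval integrates. -/
theorem edist_le_lintegral_of_eventually {F : ℝ → ℝ} {g : ℝ → ℝ≥0∞} {M : ℝ≥0} {a b : ℝ}
    (hab : a ≤ b) (hM : ∀ t ∈ Icc a b, g t ≤ M)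
    (h : ∀ t ∈ Icc a b, ∀ᶠ s in 𝓝[Icc a b] t,
      ENNReal.ofReal |F s - F t| ≤ ENNReal.ofReal |s - t| * g t) :
    edist (F a) (F b) ≤ ∫⁻ t in Icc a b, g t := by
  have hreal : ∀ t ∈ Icc a b, ∀ᶠ s in 𝓝[Icc a b] t, |F s - F t| ≤ (g t).toReal * |s - t| := by
    intro t ht
    filter_upwards [h t ht] with s hs
    have hg : g t ≠ ⊤ := ((hM t ht).trans_lt ENNReal.coe_lt_top).ne
    rw [← ENNReal.ofReal_toReal hg, ← ENNReal.ofReal_mul (abs_nonneg _)] at hs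
    rw [ENNReal.ofReal_le_ofReal_iff (by positivity)] at hs
    linarith
  have hlip : LipschitzOnWith (M + 1) F (Icc a b) := by
    refine lipschitzOnWith_Icc_of_eventually fun t ht => ?_
    filter_upwards [hreal t ht] with s hs
    refine hs.trans ?_
    gcongr
    exact ENNReal.toReal_le_coe_of_le_coe (hM t ht)
  have hac : AbsolutelyContinuousOnInterval F a b :=
    LipschitzOnWith.absolutelyContinuousOnInterval (by rwa [uIcc_of_le hab])
  have hint := hac.integral_deriv_eq_sub
  rw [edist_comm, edist_dist, Real.dist_eq, ← hint, ← Real.norm_eq_abs, ofReal_norm,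
    intervalIntegral.integral_of_le hab]
  refine (enorm_integral_le_lintegral_enorm _).trans ?_
  rw [restrict_Ioc_eq_restrict_Icc, ← restrict_Ioo_eq_restrict_Icc]
  refine lintegral_mono_ae ?_
  rw [ae_restrict_iff' measurableSet_Ioo]
  filter_upwards [hac.ae_differentiableAt] with t ht hmem
  have hmem' : t ∈ Icc a b := Ioo_subset_Icc_self hmem
  have hd := (ht (by rwa [uIcc_of_le hab])).hasDerivAt
  have hev : ∀ᶠ s in 𝓝 t, ‖F s - F t‖ ≤ (g t).toReal * ‖s - t‖ := by
    have := hreal t hmem'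
    rwa [nhdsWithin_eq_nhds.2 (Icc_mem_nhds hmem.1 hmem.2)] at this
  have := hd.le_of_lip' ENNReal.toReal_nonneg hev
  have hg : g t ≠ ⊤ := ((hM t hmem').trans_lt ENNReal.coe_lt_top).ne
  rw [← ofReal_norm]
  exact ENNReal.ofReal_le_of_le_toReal this

section Hausdorff

variable {T : Type*} [MetricSpace T] [MeasurableSpace T] (μ : Measure T)

/-- The infimum, over countable covers of `A` by balls of radii at most `δ`, of `∑ μ(B_i)/r_i`. -/
def codimContent (δ : ℝ) (A : Set T) : ℝ≥0∞ :=
  ⨅ (c : ℕ → T) (r : ℕ → ℝ) (_ : ∀ i, r i ≤ δ) (_ : A ⊆ ⋃ i, ball (c i) (r i)),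
    ∑' i, μ (ball (c i) (r i)) / ENNReal.ofReal (r i)

lemma codimH_eq (A : Set T) : codimH μ A = ⨆ (δ : ℝ) (_ : 0 < δ), codimContent μ δ A := rfl

variable {μ} in
lemma codimContent_le {δ : ℝ} {A : Set T} {c : ℕ → T} {r : ℕ → ℝ} (hr : ∀ i, r i ≤ δ)
    (hA : A ⊆ ⋃ i, ball (c i) (r i)) :
    codimContent μ δ A ≤ ∑' i, μ (ball (c i) (r i)) / ENNReal.ofReal (r i) :=
  iInf_le_of_le c <| iInf_le_of_le r <| iInf_le_of_le hr <| iInf_le_of_le hA le_rfl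

variable {μ} in
lemma exists_cover_of_codimContent_lt {δ : ℝ} {A : Set T} {b : ℝ≥0∞}
    (h : codimContent μ δ A < b) :
    ∃ (c : ℕ → T) (r : ℕ → ℝ), (∀ i, r i ≤ δ) ∧ (A ⊆ ⋃ i, ball (c i) (r i)) ∧
      ∑' i, μ (ball (c i) (r i)) / ENNReal.ofReal (r i) < b := by
  simpa only [codimContent, iInf_lt_iff, exists_prop] using h

lemma codimContent_le_codimH {δ : ℝ} (hδ : 0 < δ) (A : Set T) :
    codimContent μ δ A ≤ codimH μ A :=
  le_iSup₂ (f := fun (δ : ℝ) (_ : 0 < δ) => codimContent μ δ A) δ hδ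

lemma codimContent_mono (δ : ℝ) {A B : Set T} (h : A ⊆ B) :
    codimContent μ δ A ≤ codimContent μ δ B := by
  refine le_of_forall_gt fun b hb => ?_
  obtain ⟨c, r, hr, hB, hlt⟩ := exists_cover_of_codimContent_lt hb
  exact (codimContent_le hr (h.trans hB)).trans_lt hlt

lemma codimH_mono {A B : Set T} (h : A ⊆ B) : codimH μ A ≤ codimH μ B :=
  iSup₂_mono fun δ _ => codimContent_mono μ δ h

lemma codimContent_anti {δ δ' : ℝ} (h : δ ≤ δ') (A : Set T) :
    codimContent μ δ' A ≤ codimContent μ δ A := by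
  refine le_of_forall_gt fun b hb => ?_
  obtain ⟨c, r, hr, hB, hlt⟩ := exists_cover_of_codimContent_lt hb
  exact (codimContent_le (fun i => (hr i).trans h) hB).trans_lt hlt

lemma codimContent_iUnion_le (δ : ℝ) (s : ℕ → Set T) :
    codimContent μ δ (⋃ n, s n) ≤ ∑' n, codimContent μ δ (s n) := by
  refine ENNReal.le_of_forall_pos_le_add fun ε hε hfin => ?_
  obtain ⟨ε', hε', hsum⟩ := ENNReal.exists_pos_sum_of_countable (ι := ℕ)
    (ENNReal.coe_ne_zero.2 hε.ne')
  have hlt : ∀ n, codimContent μ δ (s n) < codimContent μ δ (s n) + ε' n := fun n =>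
    ENNReal.lt_add_right ((ENNReal.le_tsum n).trans_lt hfin).ne
      (ENNReal.coe_ne_zero.2 (hε' n).ne')
  choose c r hr hcov hsm using fun n => exists_cover_of_codimContent_lt (hlt n)
  have hle := codimContent_le (μ := μ) (δ := δ) (A := ⋃ n, s n)
    (c := fun k => c k.unpair.1 k.unpair.2) (r := fun k => r k.unpair.1 k.unpair.2)
    (fun k => hr _ _) (by
      refine iUnion_subset fun n x hx => ?_
      obtain ⟨i, hi⟩ := mem_iUnion.1 (hcov n hx)
      refine mem_iUnion.2 ⟨Nat.pair n i, ?_⟩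
      simpa using hi)
  refine hle.trans ?_
  have : ∑' k : ℕ, μ (ball (c k.unpair.1 k.unpair.2) (r k.unpair.1 k.unpair.2)) /
      ENNReal.ofReal (r k.unpair.1 k.unpair.2) =
      ∑' n, ∑' i, μ (ball (c n i) (r n i)) / ENNReal.ofReal (r n i) := by
    rw [← ENNReal.tsum_prod, ← Nat.pairEquiv.symm.tsum_eq]
    rfl
  rw [this]
  calc _ ≤ ∑' n, (codimContent μ δ (s n) + ε' n) := ENNReal.tsum_le_tsum fun n => (hsm n).le
    _ = ∑' n, codimContent μ δ (s n) + ∑' n, (ε' n : ℝ≥0∞) := ENNReal.tsum_add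
    _ ≤ _ := by gcongr

/-- The codimension 1 spherical Hausdorff measure as an outer measure. -/
def codimOuter [Nonempty T] : OuterMeasure T where
  measureOf := codimH μ
  empty := by
    refine le_antisymm ?_ zero_le
    rw [codimH_eq]
    refine iSup₂_le fun δ hδ => ?_
    have x : T := Classical.arbitrary T
    refine (codimContent_le (c := fun _ => x) (r := fun _ => 0) (fun _ => hδ.le)
      (empty_subset _)).trans ?_
    simp
  mono := fun h => codimH_mono μ h
  iUnion_nat := fun s _ => by
    refine iSup₂_le fun δ hδ => ?_
    refine (codimContent_iUnion_le μ δ s).trans ?_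
    exact ENNReal.tsum_le_tsum fun n => codimContent_le_codimH μ hδ _

lemma codimOuter_isMetric [Nonempty T] : (codimOuter μ).IsMetric := by
  rintro s t ⟨r₀, hr₀, hsep⟩
  refine le_antisymm (measure_union_le _ _) ?_
  change codimH μ s + codimH μ t ≤ codimH μ (s ∪ t)
  obtain ⟨η, hη, hηr⟩ : ∃ η : ℝ, 0 < η ∧ ENNReal.ofReal (2 * η) ≤ r₀ := by
    obtain ⟨q, hq0, hq⟩ := ENNReal.lt_iff_exists_nnreal_btwn.1 (pos_iff_ne_zero.2 hr₀)
    refine ⟨q / 2, by simpa using hq0, ?_⟩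
    rw [mul_div_cancel₀ _ two_ne_zero, ENNReal.ofReal_coe_nnreal]
    exact hq.le
  have hc : ∀ δ, 0 < δ → δ ≤ η →
      codimContent μ δ s + codimContent μ δ t ≤ codimH μ (s ∪ t) := by
    intro δ hδ hδη
    refine le_trans ?_ (codimContent_le_codimH μ hδ _)
    refine le_of_forall_gt fun b hb => ?_
    obtain ⟨c, r, hr, hB, hlt⟩ := exists_cover_of_codimContent_lt hb
    refine lt_of_le_of_lt ?_ hlt
    classical
    set r₁ : ℕ → ℝ := fun i => if (ball (c i) (r i) ∩ s).Nonempty then r i else 0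
    set r₂ : ℕ → ℝ := fun i => if (ball (c i) (r i) ∩ s).Nonempty then 0 else r i
    have h₁ : codimContent μ δ s ≤
        ∑' i, μ (ball (c i) (r₁ i)) / ENNReal.ofReal (r₁ i) := by
      refine codimContent_le (fun i => ?_) fun x hx => ?_
      · dsimp only [r₁]; split_ifs; exacts [hr i, hδ.le]
      · obtain ⟨i, hi⟩ := mem_iUnion.1 (hB (Or.inl hx))
        refine mem_iUnion.2 ⟨i, ?_⟩
        have : (ball (c i) (r i) ∩ s).Nonempty := ⟨x, hi, hx⟩
        simpa [r₁, this] using hi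
    have h₂ : codimContent μ δ t ≤
        ∑' i, μ (ball (c i) (r₂ i)) / ENNReal.ofReal (r₂ i) := by
      refine codimContent_le (fun i => ?_) fun x hx => ?_
      · dsimp only [r₂]; split_ifs; exacts [hδ.le, hr i]
      · obtain ⟨i, hi⟩ := mem_iUnion.1 (hB (Or.inr hx))
        refine mem_iUnion.2 ⟨i, ?_⟩
        have : ¬ (ball (c i) (r i) ∩ s).Nonempty := by
          rintro ⟨y, hy, hys⟩
          have h3 := hsep y hys x hx
          have h4 : dist y x < 2 * η := by
            have := dist_triangle_right y x (c i)
            have := mem_ball.1 hy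
            have := mem_ball.1 hi
            linarith [hr i]
          rw [edist_dist] at h3
          have h5 : ENNReal.ofReal (dist y x) < ENNReal.ofReal (2 * η) :=
            (ENNReal.ofReal_lt_ofReal_iff (by linarith)).2 h4
          exact absurd (hηr.trans h3) (not_le.2 h5)
        simpa [r₂, this] using hi
    refine (add_le_add h₁ h₂).trans ?_
    rw [← ENNReal.tsum_add]
    refine ENNReal.tsum_le_tsum fun i => ?_
    dsimp only [r₁, r₂]
    split_ifs <;> simp
  rw [codimH_eq μ s, codimH_eq μ t]
  refine ENNReal.biSup_add_biSup_le' ⟨1, one_pos⟩ ⟨1, one_pos⟩ fun δ₁ h₁ δ₂ h₂ => ?_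
  refine le_trans ?_ (hc (min (min δ₁ δ₂) η) (by positivity) (min_le_right _ _))
  gcongr
  · exact codimContent_anti μ ((min_le_left _ _).trans (min_le_left _ _)) _
  · exact codimContent_anti μ ((min_le_left _ _).trans (min_le_right _ _)) _

/-- The codimension 1 spherical Hausdorff measure as a Borel measure. -/
def codimMeasure [Nonempty T] [BorelSpace T] : Measure T :=
  (codimOuter μ).toMeasure
    (BorelSpace.measurable_eq (α := T) |>.le.trans (codimOuter_isMetric μ).borel_le_caratheodory)

lemma codimMeasure_apply [Nonempty T] [BorelSpace T] {A : Set T} (hA : MeasurableSet A) :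
    codimMeasure μ A = codimH μ A :=
  toMeasure_apply _ _ hA

end Hausdorff

lemma volume_Ioi_ofReal_lt (a : ℝ≥0∞) :
    volume.restrict (Ioi (0 : ℝ)) {t | ENNReal.ofReal t < a} = a := by
  have hm : MeasurableSet {t : ℝ | ENNReal.ofReal t < a} :=
    measurableSet_lt ENNReal.measurable_ofReal measurable_const
  rw [Measure.restrict_apply hm]
  rcases eq_or_ne a ⊤ with rfl | ha
  · simp
  · have : {t : ℝ | ENNReal.ofReal t < a} ∩ Ioi 0 = Ioo 0 a.toReal := by
      ext t
      simp only [mem_inter_iff, mem_ofPred_eq, mem_Ioi, mem_Ioo]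
      constructor
      · rintro ⟨h, h0⟩; exact ⟨h0, (ENNReal.ofReal_lt_iff_lt_toReal h0.le ha).1 h⟩
      · rintro ⟨h0, h⟩; exact ⟨(ENNReal.ofReal_lt_iff_lt_toReal h0.le ha).2 h, h0⟩
    rw [this, Real.volume_Ioo, sub_zero, ENNReal.ofReal_toReal ha]

/-- The layer-cake formula for functions with values in `[0, ∞]`. -/
lemma lintegral_eq_lintegral_meas_ofReal_lt {α : Type*} [MeasurableSpace α] (ν : Measure α)
    [SFinite ν] {g : α → ℝ≥0∞} (hg : Measurable g) :
    ∫⁻ x, g x ∂ν = ∫⁻ t in Ioi (0 : ℝ), ν {x | ENNReal.ofReal t < g x} := by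
  have hm : MeasurableSet {q : α × ℝ | ENNReal.ofReal q.2 < g q.1} :=
    measurableSet_lt (ENNReal.measurable_ofReal.comp measurable_snd) (hg.comp measurable_fst)
  have h1 := Measure.prod_apply (μ := ν) (ν := volume.restrict (Ioi (0 : ℝ))) hm
  have h2 := Measure.prod_apply_symm (μ := ν) (ν := volume.restrict (Ioi (0 : ℝ))) hm
  rw [h1] at h2
  calc _ = _ := lintegral_congr fun x => (volume_Ioi_ofReal_lt (g x)).symm
    _ = _ := h2

lemma choquetIntegral_eq_lintegral {T : Type*} [MetricSpace T] [MeasurableSpace T]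
    [BorelSpace T] [Nonempty T] (μ : Measure T) {S : Set T} (hS : MeasurableSet S)
    (hfin : codimH μ S < ⊤) {g : T → ℝ≥0∞} (hg : Measurable g) :
    choquetIntegral μ S g = ∫⁻ x in S, g x ∂(codimMeasure μ) := by
  have : IsFiniteMeasure ((codimMeasure μ).restrict S) :=
    ⟨by rwa [Measure.restrict_apply_univ, codimMeasure_apply μ hS]⟩
  rw [lintegral_eq_lintegral_meas_ofReal_lt _ hg, choquetIntegral]
  refine lintegral_congr fun t => ?_
  have hm : MeasurableSet {x | ENNReal.ofReal t < g x} := measurableSet_lt measurable_const hg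
  rw [Measure.restrict_apply hm, codimMeasure_apply μ (hm.inter hS), inter_comm]
  rfl

section Doubling

variable {T : Type*} [MetricSpace T] [MeasurableSpace T] {μ : Measure T} {c : ℝ≥0} {CP lP : ℝ}

lemma SupportsPoincare.isFiniteMeasure [CompactSpace T] (hP : SupportsPoincare μ CP lP) :
    IsFiniteMeasure μ := by
  rcases isEmpty_or_nonempty T with h | ⟨⟨x⟩⟩
  · exact ⟨by simp [Set.eq_empty_of_isEmpty (univ : Set T)]⟩
  · refine ⟨lt_of_le_of_lt (measure_mono fun y _ => ?_)
      (hP.1 x (diam (univ : Set T) + 1) (by positivity)).2⟩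
    have := dist_le_diam_of_mem isCompact_univ.isBounded (mem_univ y) (mem_univ x)
    rw [mem_ball]; linarith

lemma IsDoubling.measure_ball_le (hD : IsDoubling μ (c : ℝ≥0∞)) (n : ℕ) (x : T) {r : ℝ}
    (hr : 0 < r) (hn : 2 ^ n * r ≤ diam (univ : Set T)) :
    μ (ball x (2 ^ n * r)) ≤ (c : ℝ≥0∞) ^ n * μ (ball x r) := by
  induction n with
  | zero => simp
  | succ n ih =>
    have hpos : 0 < 2 ^ n * r := by positivity
    have h1 : 2 ^ n * r < diam (univ : Set T) := by
      rw [pow_succ] at hn; linarith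
    have h2 := (hD x (2 ^ n * r) hpos h1).2.1
    rw [pow_succ, mul_comm (2 ^ n) (2 : ℝ), mul_assoc]
    refine h2.trans ?_
    rw [pow_succ, mul_comm ((c : ℝ≥0∞) ^ n), mul_assoc]
    gcongr
    exact ih h1.le

/-- Doubling for two balls whose radii and centers are comparable. -/
lemma IsDoubling.measure_le_of_subset (hD : IsDoubling μ (c : ℝ≥0∞)) (n : ℕ) {x : T} {r : ℝ}
    {A : Set T} (hr : 0 < r) (hn : 2 ^ n * r ≤ diam (univ : Set T))
    (hA : A ⊆ ball x (2 ^ n * r)) : μ A ≤ (c : ℝ≥0∞) ^ n * μ (ball x r) :=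
  (measure_mono hA).trans (hD.measure_ball_le n x hr hn)

/-- The Poincaré inequality without averages, at small scales. -/
lemma SupportsPoincare.lintegral_le (hD : IsDoubling μ (c : ℝ≥0∞))
    (hP : SupportsPoincare μ CP lP) {m : ℕ} (hm : 0 < lP → 1 ≤ 2 ^ m * lP)
    {x : T} {r : ℝ} (hr : 0 < r) (hr' : 2 ^ m * lP * r ≤ diam (univ : Set T))
    {u : T → ℝ} {ρ : T → ℝ≥0∞} (hu : LocallyIntegrable u μ) (hρ : Measurable ρ)
    (hg : IsUpperGradient u ρ) :
    ∫⁻ y in ball x r, ENNReal.ofReal |u y - ⨍ z in ball x r, u z ∂μ| ∂μ ≤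
      ENNReal.ofReal (2 * |CP| * r) * (c : ℝ≥0∞) ^ m *
        ∫⁻ y in ball x (max lP 1 * r), ρ y ∂μ := by
  have h := hP.2 u ρ hu hρ hg x r hr
  obtain ⟨hpos, hfin⟩ := hP.1 x r hr
  rw [ENNReal.div_le_iff hpos.ne' hfin.ne] at h
  refine h.trans ?_
  have hdiam : ENNReal.ofReal (CP * diam (ball x r)) ≤ ENNReal.ofReal (2 * |CP| * r) := by
    apply ENNReal.ofReal_le_ofReal
    have h1 : diam (ball x r) ≤ 2 * r := diam_ball hr.le
    have h2 : (0 : ℝ) ≤ diam (ball x r) := diam_nonneg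
    calc CP * diam (ball x r) ≤ |CP| * diam (ball x r) := by gcongr; exact le_abs_self _
      _ ≤ |CP| * (2 * r) := by gcongr
      _ = _ := by ring
  rw [mul_assoc, mul_assoc]
  refine mul_le_mul' hdiam ?_
  rcases le_or_gt lP 0 with hl | hl
  · rw [ball_eq_empty.2 (mul_nonpos_of_nonpos_of_nonneg hl hr.le)]
    simp
  have hlr : 0 < lP * r := by positivity
  obtain ⟨hpos', hfin'⟩ := hP.1 x (lP * r) hlr
  have hdb : μ (ball x r) ≤ (c : ℝ≥0∞) ^ m * μ (ball x (lP * r)) := by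
    refine hD.measure_le_of_subset m hlr (by linarith) (ball_subset_ball ?_)
    have := mul_le_mul_of_nonneg_right (hm hl) hr.le
    linarith
  calc (∫⁻ y in ball x (lP * r), ρ y ∂μ) / μ (ball x (lP * r)) * μ (ball x r)
      ≤ (∫⁻ y in ball x (lP * r), ρ y ∂μ) / μ (ball x (lP * r)) *
        ((c : ℝ≥0∞) ^ m * μ (ball x (lP * r))) := by gcongr
    _ = (c : ℝ≥0∞) ^ m * ((∫⁻ y in ball x (lP * r), ρ y ∂μ) / μ (ball x (lP * r)) *
        μ (ball x (lP * r))) := by ring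
    _ = (c : ℝ≥0∞) ^ m * (∫⁻ y in ball x (lP * r), ρ y ∂μ) := by
        rw [ENNReal.div_mul_cancel hpos'.ne' hfin'.ne]
    _ ≤ _ := by
        gcongr
        exact le_max_left _ _

end Doubling

lemma ofReal_abs_setAverage_sub_mul_le {α : Type*} [MeasurableSpace α] {ν : Measure α} {s : Set α}
    (hs : ν s ≠ ⊤) {u : α → ℝ} (hu : IntegrableOn u s ν) (a : ℝ) :
    ENNReal.ofReal |(⨍ x in s, u x ∂ν) - a| * ν s ≤ ∫⁻ x in s, ENNReal.ofReal |u x - a| ∂ν := by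
  have h1 : ∫ x in s, (u x - a) ∂ν = ν.real s * ((⨍ x in s, u x ∂ν) - a) := by
    rw [integral_sub hu (integrableOn_const hs), ← measure_smul_setAverage _ hs]
    simp [mul_sub]
  have h2 := enorm_integral_le_lintegral_enorm (μ := ν.restrict s) fun x => u x - a
  rw [h1, ← ofReal_norm, norm_mul, ENNReal.ofReal_mul (norm_nonneg _), mul_comm] at h2
  simp only [← ofReal_norm, Real.norm_eq_abs] at h2
  rwa [abs_of_nonneg measureReal_nonneg, ofReal_measureReal hs] at h2

section Quasiconvex

variable {T : Type*} [MetricSpace T] [MeasurableSpace T] [BorelSpace T] [CompactSpace T]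
  {μ : Measure T} {c : ℝ≥0} {CP lP : ℝ}

/-- Under a Poincaré inequality, functions with upper gradient `1` are Lipschitz at small
scales. -/
theorem exists_abs_sub_le_of_isUpperGradient_one (hD : IsDoubling μ (c : ℝ≥0∞))
    (hP : SupportsPoincare μ CP lP) (hd : 0 < diam (univ : Set T)) :
    ∃ K r₀ : ℝ, 0 ≤ K ∧ 0 < r₀ ∧ ∀ u : T → ℝ, Continuous u → IsUpperGradient u (fun _ => 1) →
      ∀ x y : T, ∀ r, 0 < r → r < r₀ → dist x y < r → |u x - u y| ≤ K * r := by
  have := hP.isFiniteMeasure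
  obtain ⟨m, hm⟩ : ∃ m : ℕ, 0 < lP → 1 ≤ 2 ^ m * lP := by
    obtain ⟨m, hm⟩ := pow_unbounded_of_one_lt (1 / lP) one_lt_two
    refine ⟨m, fun hl => ?_⟩
    rw [div_lt_iff₀ hl] at hm
    exact hm.le
  obtain ⟨l, hl⟩ : ∃ l : ℕ, max lP 1 < 2 ^ l := pow_unbounded_of_one_lt _ one_lt_two
  obtain ⟨N, hN1, hN2, hN3⟩ : ∃ N : ℕ, 2 ^ m * lP ≤ 2 ^ N ∧ (2 : ℝ) ^ l ≤ 2 ^ N ∧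
      (4 : ℝ) ≤ 2 ^ N := by
    obtain ⟨n, hn⟩ := pow_unbounded_of_one_lt (max (2 ^ m * lP) (max (2 ^ l) 4)) one_lt_two
    exact ⟨n, (le_max_left _ _).trans hn.le,
      ((le_max_left _ _).trans (le_max_right _ _)).trans hn.le,
      ((le_max_right _ _).trans (le_max_right _ _)).trans hn.le⟩
  set r₁ : ℝ := diam (univ : Set T) / 2 ^ N with hr₁
  have hr₁pos : 0 < r₁ := by positivity
  have hsm : ∀ a : ℝ, a ≤ 2 ^ N → ∀ r, 0 < r → r ≤ r₁ → a * r ≤ diam (univ : Set T) := by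
    intro a ha r hr hrr
    rw [hr₁, le_div_iff₀ (by positivity)] at hrr
    nlinarith
  set A : ℝ := 2 * |CP| * (c : ℝ) ^ m * (c : ℝ) ^ l * (c : ℝ) ^ 2 with hA
  have hA0 : 0 ≤ A := by positivity
  refine ⟨8 * A, r₁ / 2, by positivity, by positivity, fun u hu hug => ?_⟩
  have hui : Integrable u μ :=
    hu.integrable_of_hasCompactSupport (HasCompactSupport.of_compactSpace _)
  have hosc : ∀ x r, 0 < r → r ≤ r₁ → ∀ y s, 0 < s → ball y s ⊆ ball x r →
      μ (ball x r) ≤ (c : ℝ≥0∞) ^ 2 * μ (ball y s) →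
      |(⨍ z in ball y s, u z ∂μ) - ⨍ z in ball x r, u z ∂μ| ≤ A * r := by
    intro x r hr hrr y s hs hsub hdb
    have h1 := hP.lintegral_le (x := x) hD hm hr (hsm _ hN1 r hr hrr) hui.locallyIntegrable
      measurable_const hug
    have h2 := ofReal_abs_setAverage_sub_mul_le (hP.1 y s hs).2.ne hui.integrableOn
      (⨍ z in ball x r, u z ∂μ)
    have h3 : ∫⁻ z in ball x (max lP 1 * r), (1 : ℝ≥0∞) ∂μ ≤
        (c : ℝ≥0∞) ^ l * ((c : ℝ≥0∞) ^ 2 * μ (ball y s)) := by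
      rw [setLIntegral_one]
      refine (hD.measure_le_of_subset l hr (hsm _ hN2 r hr hrr) (ball_subset_ball ?_)).trans ?_
      · gcongr
      · gcongr
    have h4 : ENNReal.ofReal |(⨍ z in ball y s, u z ∂μ) - ⨍ z in ball x r, u z ∂μ| *
        μ (ball y s) ≤ ENNReal.ofReal (A * r) * μ (ball y s) := by
      refine h2.trans ((lintegral_mono_set hsub).trans (h1.trans ?_))
      refine (mul_le_mul_right h3 _).trans (le_of_eq ?_)
      have : ENNReal.ofReal (A * r) = ENNReal.ofReal (2 * |CP| * r) * (c : ℝ≥0∞) ^ m *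
          (c : ℝ≥0∞) ^ l * (c : ℝ≥0∞) ^ 2 := by
        rw [← ENNReal.ofReal_coe_nnreal (p := c)]
        simp only [← ENNReal.ofReal_pow c.coe_nonneg]
        rw [← ENNReal.ofReal_mul (by positivity), ← ENNReal.ofReal_mul (by positivity),
          ← ENNReal.ofReal_mul (by positivity)]
        congr 1
        rw [hA]; ring
      rw [this]; ring
    rw [ENNReal.mul_le_mul_iff_left (hP.1 y s hs).1.ne' (hP.1 y s hs).2.ne] at h4
    rwa [ENNReal.ofReal_le_ofReal_iff (by positivity)] at h4
  have htel : ∀ x r, 0 < r → r ≤ r₁ → |u x - ⨍ z in ball x r, u z ∂μ| ≤ 2 * A * r := by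
    intro x r hr hrr
    have hrn : ∀ n : ℕ, 0 < r / 2 ^ n := fun n => by positivity
    have hrn1 : ∀ n : ℕ, r / 2 ^ n ≤ r₁ := fun n =>
      (div_le_self hr.le (one_le_pow₀ one_le_two)).trans hrr
    have hstep : ∀ n : ℕ, |(⨍ z in ball x (r / 2 ^ n), u z ∂μ) - ⨍ z in ball x r, u z ∂μ| ≤
        2 * A * r - 2 * A * (r / 2 ^ n) := by
      intro n
      induction n with
      | zero => simp
      | succ n ih =>
        have e : r / 2 ^ (n + 1) = r / 2 ^ n / 2 := by rw [pow_succ, div_div]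
        have hn0 := hrn n
        have hn1 := hrn1 n
        rw [e]
        have h := hosc x (r / 2 ^ n) hn0 hn1 x (r / 2 ^ n / 2) (by positivity)
          (ball_subset_ball (by linarith))
          (hD.measure_le_of_subset 2 (by positivity)
            (hsm _ (by linarith) _ (by positivity) (by linarith)) (ball_subset_ball (by linarith)))
        have := abs_sub_le (⨍ z in ball x (r / 2 ^ n / 2), u z ∂μ)
          (⨍ z in ball x (r / 2 ^ n), u z ∂μ) (⨍ z in ball x r, u z ∂μ)
        linarith
    have hlim : Tendsto (fun n : ℕ => ⨍ z in ball x (r / 2 ^ n), u z ∂μ) atTop (𝓝 (u x)) := by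
      rw [Metric.tendsto_atTop]
      intro ε hε
      obtain ⟨δ, hδ, hδu⟩ := Metric.continuousAt_iff.1 (hu.continuousAt (x := x)) (ε / 2)
          (by positivity)
      have ht : Tendsto (fun n : ℕ => r / 2 ^ n) atTop (𝓝 0) := by
        have := (tendsto_pow_atTop_nhds_zero_of_lt_one (r := (1 / 2 : ℝ)) (by norm_num)
          (by norm_num)).const_mul r
        simpa [div_eq_mul_inv] using this
      obtain ⟨n₀, hn₀⟩ := (ht.eventually (gt_mem_nhds hδ)).exists_forall_of_atTop
      refine ⟨n₀, fun n hn => ?_⟩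
      obtain ⟨hp, hf⟩ := hP.1 x _ (hrn n)
      have h2 := ofReal_abs_setAverage_sub_mul_le hf.ne hui.integrableOn (u x)
      have h3 : ∫⁻ z in ball x (r / 2 ^ n), ENNReal.ofReal |u z - u x| ∂μ ≤
          ENNReal.ofReal (ε / 2) * μ (ball x (r / 2 ^ n)) := by
        rw [← setLIntegral_const]
        refine setLIntegral_mono measurable_const fun z hz => ENNReal.ofReal_le_ofReal ?_
        have := hδu (x := z) ((mem_ball.1 hz).trans (hn₀ n hn))
        rw [Real.dist_eq] at this
        exact this.le
      have h4 := h2.trans h3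
      rw [ENNReal.mul_le_mul_iff_left hp.ne' hf.ne,
        ENNReal.ofReal_le_ofReal_iff (by positivity)] at h4
      rw [Real.dist_eq]
      linarith
    have hlim2 := ((hlim.sub_const (⨍ z in ball x r, u z ∂μ)).abs)
    refine le_of_tendsto hlim2 (Eventually.of_forall fun n => (hstep n).trans ?_)
    have := mul_nonneg hA0 (hrn n).le
    linarith
  intro x y r hr hrr hxy
  have h1 := htel x (2 * r) (by positivity) (by linarith)
  have h2 := htel y r hr (by linarith)
  have h3 := hosc x (2 * r) (by positivity) (by linarith) y r hr
    (ball_subset_ball' (by rw [dist_comm]; linarith)) (by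
      refine hD.measure_le_of_subset 2 hr (hsm _ (by linarith) r hr (by linarith))
        (ball_subset_ball' ?_)
      linarith)
  rw [abs_le] at *
  constructor <;> linarith [h1.1, h1.2, h2.1, h2.2, h3.1, h3.2]

end Quasiconvex

section Chains

variable {T : Type*} [MetricSpace T] {ε L L' : ℝ} {x y z : T}

/-- `y` can be reached from `x` along a curve of length `L` up to an error `ε`. -/
def ChainReach (ε : ℝ) (x : T) (L : ℝ) (y : T) : Prop :=
  0 ≤ L ∧ ∃ f : ℝ → T, f 0 = x ∧ f L = y ∧
    ∀ s ∈ Icc 0 L, ∀ t ∈ Icc 0 L, dist (f s) (f t) ≤ |s - t| + ε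

lemma ChainReach.refl (hε : 0 ≤ ε) (x : T) : ChainReach ε x 0 x :=
  ⟨le_rfl, fun _ => x, rfl, rfl, fun s _ t _ => by rw [dist_self]; positivity⟩

lemma ChainReach.step (h : ChainReach ε x L y) (hyz : dist y z ≤ ε) (hL : L + dist y z ≤ L') :
    ChainReach ε x L' z := by
  obtain ⟨hL0, f, hf0, hfL, hf⟩ := h
  have hd := dist_nonneg (x := y) (y := z)
  have hε : 0 ≤ ε := hd.trans hyz
  refine ⟨by linarith, fun t => if t ≤ L then f t else if t < L + dist y z then y else z,
    by simp [hL0, hf0], ?_, ?_⟩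
  · by_cases h : L' ≤ L
    · have h1 : dist y z = 0 := by linarith
      have h2 : L' = L := by linarith
      simp [h2, hfL, dist_eq_zero.1 h1]
    · simp [h, hL]
  · have key : ∀ s ∈ Icc 0 L', ∀ t ∈ Icc 0 L', s ≤ t →
        dist ((fun t => if t ≤ L then f t else if t < L + dist y z then y else z) s)
          ((fun t => if t ≤ L then f t else if t < L + dist y z then y else z) t) ≤
          |s - t| + ε := by
      intro s hs t ht hst
      rw [abs_of_nonpos (by linarith)]
      by_cases h1 : t ≤ L
      · have := hf s ⟨hs.1, hst.trans h1⟩ t ⟨ht.1, h1⟩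
        rw [abs_of_nonpos (by linarith)] at this
        simpa [h1, hst.trans h1] using this
      by_cases h2 : s ≤ L
      · have h3 := hf s ⟨hs.1, h2⟩ L ⟨hL0, le_rfl⟩
        rw [abs_of_nonpos (by linarith), hfL] at h3
        by_cases h4 : t < L + dist y z
        · simp only [h1, h2, h4, if_true, if_false]
          linarith
        · simp only [h1, h2, h4, if_true, if_false]
          have := dist_triangle (f s) y z
          linarith
      · by_cases h3 : s < L + dist y z
        · by_cases h4 : t < L + dist y z
          · simp only [h1, h2, h3, h4, if_true, if_false, dist_self]
            linarith
          · simp only [h1, h2, h3, h4, if_true, if_false]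
            linarith
        · have h4 : ¬ t < L + dist y z := by linarith
          simp only [h1, h2, h3, h4, if_false, dist_self]
          linarith
    intro s hs t ht
    rcases le_total s t with hst | hst
    · exact key s hs t ht hst
    · rw [dist_comm, abs_sub_comm]
      exact key t ht s hs hst

lemma exists_chainReach [PreconnectedSpace T] (hε : 0 < ε) (x y : T) :
    ∃ L, ChainReach ε x L y := by
  have hiff : ∀ y z, dist y z ≤ ε → (∃ L, ChainReach ε x L y) → ∃ L, ChainReach ε x L z :=
    fun y z h ⟨L, hL⟩ => ⟨L + dist y z, hL.step h le_rfl⟩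
  have hclopen : IsClopen {y : T | ∃ L, ChainReach ε x L y} := by
    constructor
    · rw [← isOpen_compl_iff, Metric.isOpen_iff]
      intro y hy
      refine ⟨ε, hε, fun z hz hz' => hy (hiff z y (mem_ball.1 hz).le hz')⟩
    · rw [Metric.isOpen_iff]
      intro y hy
      exact ⟨ε, hε, fun z hz => hiff y z (by rw [dist_comm]; exact (mem_ball.1 hz).le) hy⟩
  have := hclopen.eq_univ ⟨x, 0, ChainReach.refl hε.le x⟩
  exact eq_univ_iff_forall.1 this y

/-- The least length of a chain from `x` to `y`. -/
def chainDist (ε : ℝ) (x y : T) : ℝ := sInf {L | ChainReach ε x L y}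

lemma chainDist_le_add [PreconnectedSpace T] (hε : 0 < ε) (h : dist y z ≤ ε) :
    chainDist ε x z ≤ chainDist ε x y + dist y z := by
  rw [← sub_le_iff_le_add]
  refine le_csInf (exists_chainReach hε x y) fun L hL => ?_
  rw [sub_le_iff_le_add]
  exact csInf_le ⟨0, fun L hL => hL.1⟩ (ChainReach.step hL h le_rfl)

lemma abs_chainDist_sub_le [PreconnectedSpace T] (hε : 0 < ε) (h : dist y z ≤ ε) :
    |chainDist ε x y - chainDist ε x z| ≤ dist y z := by
  have h1 := chainDist_le_add (x := x) hε h
  have h2 := chainDist_le_add (x := x) hε (by rwa [dist_comm] : dist z y ≤ ε)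
  rw [dist_comm] at h2
  rw [abs_le]
  constructor <;> linarith

lemma isUpperGradient_chainDist [PreconnectedSpace T] (hε : 0 < ε) (x : T) :
    IsUpperGradient (chainDist ε x) fun _ => 1 := by
  intro γ
  refine edist_le_lintegral_of_eventually (F := fun t => chainDist ε x (γ.toFun t))
    (M := 1) γ.hab (fun t _ => by simp) fun t ht => ?_
  have : ∀ᶠ s in 𝓝[Icc γ.a γ.b] t, |s - t| < ε := by
    refine nhdsWithin_le_nhds ?_
    exact ball_mem_nhds t hε
  filter_upwards [this, self_mem_nhdsWithin] with s hs hmem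
  rw [mul_one]
  apply ENNReal.ofReal_le_ofReal
  have h1 : dist (γ.toFun s) (γ.toFun t) ≤ |s - t| := by
    have := γ.lip.dist_le_mul s hmem t ht
    simpa [Real.dist_eq] using this
  exact (abs_chainDist_sub_le hε (h1.trans hs.le)).trans h1

lemma continuous_chainDist [PreconnectedSpace T] (hε : 0 < ε) (x : T) :
    Continuous (chainDist ε x) := by
  rw [Metric.continuous_iff]
  intro y η hη
  refine ⟨min ε η, lt_min hε hη, fun z hz => ?_⟩
  exact (abs_chainDist_sub_le hε (hz.le.trans (min_le_left _ _))).trans_lt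
    (hz.trans_le (min_le_right _ _))

/-- Chains at all scales produce a curve by compactness. -/
lemma exists_lipschitz_of_chainReach [CompactSpace T]
    (h : ∀ ε > 0, ChainReach ε x L y) :
    ∃ f : ℝ → T, f 0 = x ∧ f L = y ∧ LipschitzOnWith 1 f (Icc 0 L) := by
  choose f hf0 hfL hf using fun n : ℕ => (h (1 / ((n : ℝ) + 1)) (by positivity)).2
  have : Nonempty T := ⟨x⟩
  have hlim : ∀ t, ∃ w, Tendsto (fun n => f n t) (hyperfilter ℕ) (𝓝 w) := fun t => by
    obtain ⟨w, -, hw⟩ := isCompact_univ.ultrafilter_le_nhds ((hyperfilter ℕ).map fun n => f n t)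
      (by simp)
    exact ⟨w, hw⟩
  choose g hg using hlim
  refine ⟨g, ?_, ?_, LipschitzOnWith.of_dist_le_mul fun s hs t ht => ?_⟩
  · refine tendsto_nhds_unique (hg 0) ?_
    simp only [hf0, tendsto_const_nhds]
  · refine tendsto_nhds_unique (hg L) ?_
    simp only [hfL, tendsto_const_nhds]
  · have h1 : Tendsto (fun n : ℕ => |s - t| + 1 / ((n : ℝ) + 1)) (hyperfilter ℕ)
        (𝓝 (|s - t| + 0)) :=
      (tendsto_const_nhds.add tendsto_one_div_add_atTop_nhds_zero_nat).mono_left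
        Nat.hyperfilter_le_atTop
    have := le_of_tendsto_of_tendsto ((hg s).dist (hg t)) h1
      (Eventually.of_forall fun n => hf n s hs t ht)
    simpa [Real.dist_eq] using this

end Chains

section Quasiconvex

variable {T : Type*} [MetricSpace T] [MeasurableSpace T] [BorelSpace T] [CompactSpace T]
  {μ : Measure T} {c : ℝ≥0} {CP lP : ℝ}

/-- A Poincaré inequality makes a compact connected space locally path connected. -/
theorem locallyPathConnectedSpace_of_poincare [PreconnectedSpace T]
    (hD : IsDoubling μ (c : ℝ≥0∞))
    (hP : SupportsPoincare μ CP lP) (hd : 0 < diam (univ : Set T)) :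
    LocallyPathConnectedSpace T := by
  obtain ⟨K, r₀, hK, hr₀, h⟩ := exists_abs_sub_le_of_isUpperGradient_one hD hP hd
  have hjoin : ∀ x y : T, ∀ r, 0 < r → r < r₀ → dist x y < r →
      JoinedIn (closedBall x ((K + 1) * r)) x y := by
    intro x y r hr hrr hxy
    have hch : ∀ ε > 0, ChainReach ε x ((K + 1) * r) y := by
      intro ε hε
      have h1 := h _ (continuous_chainDist hε x) (isUpperGradient_chainDist hε x) x y r hr hrr hxy
      have h2 : chainDist ε x x ≤ 0 := csInf_le ⟨0, fun L hL => hL.1⟩ (ChainReach.refl hε.le x)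
      have h3 : chainDist ε x y < (K + 1) * r := by linarith [(abs_le.1 h1).1]
      obtain ⟨L, hL, hlt⟩ := exists_lt_of_csInf_lt (exists_chainReach hε x y) h3
      exact ChainReach.step hL (by simpa using hε.le) (by simpa using hlt.le)
    obtain ⟨f, hf0, hf1, hf⟩ := exists_lipschitz_of_chainReach hch
    have hL : 0 ≤ (K + 1) * r := by positivity
    let γ : UPath T := ⟨0, (K + 1) * r, hL, f, hf⟩
    refine ⟨γ.toPath.cast hf0.symm hf1.symm, fun t => ?_⟩
    have hmem : 0 + (t : ℝ) * ((K + 1) * r - 0) ∈ Icc 0 ((K + 1) * r) :=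
      ⟨by have := t.2.1; nlinarith, by have := t.2.2; nlinarith⟩
    have := hf.dist_le_mul _ hmem 0 ⟨le_rfl, hL⟩
    rw [hf0, Real.dist_0_eq_abs, abs_of_nonneg hmem.1] at this
    simp only [NNReal.coe_one, one_mul] at this
    exact this.trans hmem.2
  rw [locallyPathConnectedSpace_iff_pathComponentIn_mem_nhds]
  intro x U hU hxU
  obtain ⟨ε, hε, hεU⟩ := Metric.isOpen_iff.1 hU x hxU
  set r := min (r₀ / 2) (ε / (2 * (K + 1))) with hr
  have hrpos : 0 < r := by positivity
  have hrε : (K + 1) * r < ε := by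
    have : r ≤ ε / (2 * (K + 1)) := min_le_right _ _
    rw [le_div_iff₀ (by positivity)] at this
    linarith
  refine mem_of_superset (ball_mem_nhds x hrpos) fun y hy => ?_
  exact (hjoin x y r hrpos ((min_le_left _ _).trans_lt (by linarith))
    (by rw [dist_comm]; exact hy)).mono ((closedBall_subset_ball hrε).trans hεU)

end Quasiconvex

section Lift

lemma locallyPathConnectedSpace_of_isLocalHomeomorph {X Y : Type*} [TopologicalSpace X]
    [TopologicalSpace Y] [LocallyPathConnectedSpace Y] {f : X → Y} (hf : IsLocalHomeomorph f) :
    LocallyPathConnectedSpace X := by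
  choose e he _ using hf
  let _ : ChartedSpace Y X :=
    { atlas := range e
      chartAt := e
      mem_chart_source := he
      chart_mem_atlas := fun x => mem_range_self x }
  exact ChartedSpace.locallyPathConnectedSpace Y X

variable {T Tt : Type*} [MetricSpace T] [MetricSpace Tt] {π : Tt → T} {τ : Tt → Tt}
  {x₀ : T} {α₀ : Path x₀ x₀}

/-- A degree `1` map lifts to a real function that is equivariant for the deck transformation. -/
theorem exists_lift_of_hasDegree_one [LocallyPathConnectedSpace T] (hπ : CoverSetup π)
    (hτ : IsDeck π x₀ α₀ τ) {φ : T → UnitAddCircle} (hφ : HasDegree x₀ α₀ φ 1) :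
    ∃ φt : C(Tt, ℝ), (∀ x, (φt x : UnitAddCircle) = φ (π x)) ∧
      ∀ x, φt (τ x) = φt x + 1 := by
  obtain ⟨hcov, hsurj, -, hsc⟩ := hπ
  obtain ⟨hφc, hdeg⟩ := hφ
  have hlpc : LocallyPathConnectedSpace Tt :=
    locallyPathConnectedSpace_of_isLocalHomeomorph hcov.isLocalHomeomorph
  have hpc : PathConnectedSpace T := hsurj.pathConnectedSpace hcov.continuous
  have hcirc := AddCircle.isCoveringMap_coe (1 : ℝ)
  obtain ⟨b, hb⟩ := hsurj x₀
  obtain ⟨e₀, he₀⟩ := QuotientAddGroup.mk_surjective (φ (π b))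
  obtain ⟨φt, ⟨-, hφt⟩, -⟩ := hcirc.existsUnique_continuousMap_lifts
    (⟨fun x => φ (π x), hφc.comp hcov.continuous⟩ : C(Tt, UnitAddCircle)) b e₀ he₀
  have hlift : ∀ x, (φt x : UnitAddCircle) = φ (π x) := fun x => congrFun hφt x
  refine ⟨φt, hlift, fun x => ?_⟩
  let η : Path (π x) x₀ := (PathConnectedSpace.somePath (π x) x₀)
  let γ : Path (π x) (π x) := η.trans (α₀.trans η.symm)
  have hγ : IsDegreeOneLoop x₀ α₀ γ := ⟨η, .refl _⟩
  have h0 : (γ : C(I, T)) 0 = π x := γ.source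
  let γt := hcov.liftPath γ x h0
  have hγt : ∀ t, π (γt t) = γ t := fun t => congrFun (hcov.liftPath_lifts γ x h0) t
  have hγ0 : γt 0 = x := hcov.liftPath_zero γ x h0
  have hτx : τ x = γt 1 := by
    have := hτ.2.2 (π x) γ hγ γt hγt
    rwa [hγ0] at this
  have hhom := hdeg (π x) γ hγ
  have e1 : ((γ.map hφc : Path _ _) : C(I, UnitAddCircle)) 0 = (φt x : UnitAddCircle) := by
    rw [hlift]; exact (γ.map hφc).source
  have e2 : ((stdLoop 1 (φ (π x)) : Path _ _) : C(I, UnitAddCircle)) 0 =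
      (φt x : UnitAddCircle) := by
    rw [hlift]; exact (stdLoop 1 (φ (π x))).source
  have hend := hcirc.liftPath_apply_one_eq_of_homotopicRel hhom (φt x) e1 e2
  have h1 : φt.comp γt = hcirc.liftPath (γ.map hφc : Path _ _) (φt x) e1 := by
    rw [hcirc.eq_liftPath_iff']
    refine ⟨funext fun t => ?_, by simp [hγ0]⟩
    change ((φt (γt t) : ℝ) : UnitAddCircle) = φ (γ t)
    rw [hlift, hγt]
  have h2 : (⟨fun t : I => φt x + (t : ℝ), by fun_prop⟩ : C(I, ℝ)) =
      hcirc.liftPath (stdLoop 1 (φ (π x)) : Path _ _) (φt x) e2 := by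
    rw [hcirc.eq_liftPath_iff']
    refine ⟨funext fun t => ?_, by simp⟩
    change ((φt x + (t : ℝ) : ℝ) : UnitAddCircle) = φ (π x) + (((1 : ℤ) : ℝ) * (t : ℝ) : ℝ)
    rw [← hlift]
    simp
  have hend' : φt.comp γt 1 = (⟨fun t : I => φt x + (t : ℝ), by fun_prop⟩ : C(I, ℝ)) 1 := by
    rw [h1, h2]; exact hend
  rw [hτx]
  simpa using hend'

end Lift

lemma nontrivial_of_isGenerator {T : Type*} [MetricSpace T] {x₀ : T} {α₀ : Path x₀ x₀}
    (h : IsGenerator x₀ α₀) : Nontrivial T := by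
  by_contra hT
  rw [not_nontrivial_iff_subsingleton] at hT
  have hs : Subsingleton (Path.Homotopic.Quotient x₀ x₀) := by
    constructor
    rintro ⟨p⟩ ⟨q⟩
    congr 1
    ext t
    exact Subsingleton.elim _ _
  have key : ∀ a b : FundamentalGroup (TopCat.of T) x₀, a = b := fun a b => hs.elim a b
  exact absurd (h.1 (key _ _) : (0 : ℤ) = 1) (by norm_num)

section Cutoff

variable {T : Type*} [MetricSpace T] {ι : Type*} (F : Finset ι) (c : ι → T) (r : ι → ℝ)

/-- The cutoff function equal to `1` on the balls `B (c i) (r i)`, `i ∈ F`, and vanishing outside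
the doubled balls. -/
def cutoff (y : T) : ℝ := min 1 (∑ i ∈ F, max 0 (2 - dist y (c i) / r i))

/-- A pointwise Lipschitz bound for `cutoff`. -/
def cutoffGrad (y : T) : ℝ := ∑ i ∈ F, (ball (c i) (3 * r i)).indicator (fun _ => (r i)⁻¹) y

lemma continuous_cutoff : Continuous (cutoff F c r) := by
  unfold cutoff; fun_prop

lemma cutoff_nonneg (y : T) : 0 ≤ cutoff F c r y :=
  le_min zero_le_one (Finset.sum_nonneg fun _ _ => le_max_left _ _)

lemma cutoff_le_one (y : T) : cutoff F c r y ≤ 1 := min_le_left _ _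

variable {F c r}

lemma cutoff_eq_one {i : ι} (hi : i ∈ F) {y : T} (hy : y ∈ ball (c i) (r i)) :
    cutoff F c r y = 1 := by
  refine min_eq_left ?_
  have hr : 0 < r i := pos_of_mem_ball hy
  have h1 : dist y (c i) / r i ≤ 1 := (div_le_one hr).2 (mem_ball.1 hy).le
  have h2 : max 0 (2 - dist y (c i) / r i) ≤ ∑ i ∈ F, max 0 (2 - dist y (c i) / r i) :=
    Finset.single_le_sum (f := fun i => max 0 (2 - dist y (c i) / r i))
      (fun _ _ => le_max_left _ _) hi
  have h3 := le_max_right 0 (2 - dist y (c i) / r i)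
  linarith

lemma cutoff_eq_zero (hr : ∀ i ∈ F, 0 < r i) {y : T} (hy : ∀ i ∈ F, y ∉ ball (c i) (2 * r i)) :
    cutoff F c r y = 0 := by
  have : ∑ i ∈ F, max 0 (2 - dist y (c i) / r i) = 0 := by
    refine Finset.sum_eq_zero fun i hi => max_eq_left ?_
    have h1 := hy i hi
    rw [mem_ball, not_lt] at h1
    rw [sub_nonpos, le_div_iff₀ (hr i hi)]
    exact h1
  simp [cutoff, this]

lemma eventually_abs_cutoff_sub_le (hr : ∀ i ∈ F, 0 < r i) (y : T) :
    ∀ᶠ z in 𝓝 y, |cutoff F c r z - cutoff F c r y| ≤ dist z y * cutoffGrad F c r y := by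
  have h : ∀ i ∈ F, ∀ᶠ z in 𝓝 y, |max 0 (2 - dist z (c i) / r i) - max 0 (2 - dist y (c i) / r i)|
      ≤ dist z y * (ball (c i) (3 * r i)).indicator (fun _ => (r i)⁻¹) y := by
    intro i hi
    have hri := hr i hi
    by_cases hy : y ∈ ball (c i) (3 * r i)
    · refine Eventually.of_forall fun z => ?_
      rw [indicator_of_mem hy]
      refine (abs_max_sub_max_le_max _ _ _ _).trans ?_
      rw [sub_self, abs_zero, max_eq_right (abs_nonneg _)]
      have : 2 - dist z (c i) / r i - (2 - dist y (c i) / r i) =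
          (dist y (c i) - dist z (c i)) * (r i)⁻¹ := by ring
      rw [this, abs_mul, abs_of_pos (inv_pos.2 hri)]
      gcongr
      rw [abs_sub_comm]
      exact abs_dist_sub_le _ _ _
    · rw [indicator_of_notMem hy]
      rw [mem_ball, not_lt] at hy
      filter_upwards [ball_mem_nhds y hri] with z hz
      have h1 := dist_triangle_left y (c i) z
      rw [mem_ball] at hz
      have h2 : 2 * r i ≤ dist z (c i) := by linarith
      have h3 : 2 - dist z (c i) / r i ≤ 0 := by
        rwa [sub_nonpos, le_div_iff₀ hri]
      have h4 : 2 - dist y (c i) / r i ≤ 0 := by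
        rw [sub_nonpos, le_div_iff₀ hri]; linarith
      rw [max_eq_left h3, max_eq_left h4, sub_zero, abs_zero, mul_zero]
  filter_upwards [(Finset.eventually_all F).2 h] with z hz
  refine (abs_min_sub_min_le_max _ _ _ _).trans ?_
  rw [sub_self, abs_zero, max_eq_right (abs_nonneg _), ← Finset.sum_sub_distrib, cutoffGrad,
    Finset.mul_sum]
  exact (Finset.abs_sum_le_sum_abs _ _).trans (Finset.sum_le_sum hz)

lemma cutoffGrad_nonneg (hr : ∀ i ∈ F, 0 < r i) (y : T) : 0 ≤ cutoffGrad F c r y :=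
  Finset.sum_nonneg fun i hi => indicator_nonneg (fun _ _ => (inv_pos.2 (hr i hi)).le) _

lemma cutoffGrad_le (hr : ∀ i ∈ F, 0 < r i) (y : T) :
    cutoffGrad F c r y ≤ ∑ i ∈ F, (r i)⁻¹ :=
  Finset.sum_le_sum fun i hi => indicator_le_self' (fun _ _ => (inv_pos.2 (hr i hi)).le) _

lemma measurable_cutoffGrad [MeasurableSpace T] [OpensMeasurableSpace T] :
    Measurable (cutoffGrad F c r) := by
  unfold cutoffGrad
  exact Finset.measurable_fun_sum _ fun i _ => measurable_const.indicator measurableSet_ball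

lemma lintegral_cutoffGrad [MeasurableSpace T] [OpensMeasurableSpace T] (μ : Measure T)
    (hr : ∀ i ∈ F, 0 < r i) :
    ∫⁻ y, ENNReal.ofReal (cutoffGrad F c r y) ∂μ =
      ∑ i ∈ F, μ (ball (c i) (3 * r i)) / ENNReal.ofReal (r i) := by
  have h : ∀ y, ENNReal.ofReal (cutoffGrad F c r y) =
      ∑ i ∈ F, (ball (c i) (3 * r i)).indicator (fun _ => (ENNReal.ofReal (r i))⁻¹) y := by
    intro y
    rw [cutoffGrad, ENNReal.ofReal_sum_of_nonneg fun i hi =>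
      indicator_nonneg (fun _ _ => (inv_pos.2 (hr i hi)).le) _]
    refine Finset.sum_congr rfl fun i hi => ?_
    by_cases hy : y ∈ ball (c i) (3 * r i)
    · simp [hy, ENNReal.ofReal_inv_of_pos (hr i hi)]
    · simp [hy]
  simp only [h]
  rw [lintegral_finsetSum _ fun i _ => measurable_const.indicator measurableSet_ball]
  refine Finset.sum_congr rfl fun i _ => ?_
  rw [lintegral_indicator_const measurableSet_ball, div_eq_mul_inv, mul_comm]

lemma lintegral_cutoff_le [MeasurableSpace T] (μ : Measure T) (hr : ∀ i ∈ F, 0 < r i) (A : Set T) :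
    ∫⁻ y in A, ENNReal.ofReal (cutoff F c r y) ∂μ ≤ ∑ i ∈ F, μ (ball (c i) (2 * r i)) := by
  have h : ∀ y, ENNReal.ofReal (cutoff F c r y) ≤
      (⋃ i ∈ F, ball (c i) (2 * r i)).indicator (fun _ => 1) y := by
    intro y
    by_cases hy : y ∈ ⋃ i ∈ F, ball (c i) (2 * r i)
    · simp only [hy, indicator_of_mem]
      exact ENNReal.ofReal_le_one.2 (cutoff_le_one _ _ _ y)
    · rw [cutoff_eq_zero hr fun i hi h => hy (mem_biUnion hi h)]
      simp
  calc _ ≤ ∫⁻ y, (⋃ i ∈ F, ball (c i) (2 * r i)).indicator (fun _ => 1) y ∂μ :=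
        (setLIntegral_le_lintegral _ _).trans (lintegral_mono h)
    _ ≤ μ (⋃ i ∈ F, ball (c i) (2 * r i)) := by
        simpa using lintegral_indicator_const_le (μ := μ) (⋃ i ∈ F, ball (c i) (2 * r i)) 1
    _ ≤ _ := measure_biUnion_finset_le _ _

end Cutoff

section Isoperimetric

variable {T : Type*} [MetricSpace T]

lemma UPath.dist_le {X : Type*} [PseudoMetricSpace X] (γ : UPath X) {s t : ℝ}
    (hs : s ∈ Icc γ.a γ.b) (ht : t ∈ Icc γ.a γ.b) :
    dist (γ.toFun s) (γ.toFun t) ≤ |s - t| := by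
  simpa [Real.dist_eq] using γ.lip.dist_le_mul s hs t ht

lemma UPath.tendsto {X : Type*} [PseudoMetricSpace X] (γ : UPath X) {t : ℝ}
    (ht : t ∈ Icc γ.a γ.b) :
    Tendsto γ.toFun (𝓝[Icc γ.a γ.b] t) (𝓝 (γ.toFun t)) :=
  γ.lip.continuousOn t ht

/-- A pointwise Lipschitz bound by `g` along a path is an upper gradient inequality. -/
lemma UPath.edist_le_integral {X : Type*} [PseudoMetricSpace X] (γ : UPath X) {u : X → ℝ}
    {g : X → ℝ} {M : ℝ≥0} (hg0 : ∀ y, 0 ≤ g y) (hM : ∀ t ∈ Icc γ.a γ.b, g (γ.toFun t) ≤ M)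
    (h : ∀ t ∈ Icc γ.a γ.b, ∀ᶠ z in 𝓝 (γ.toFun t),
      |u z - u (γ.toFun t)| ≤ dist z (γ.toFun t) * g (γ.toFun t)) :
    edist (u γ.start) (u γ.finish) ≤ γ.integral fun y => ENNReal.ofReal (g y) := by
  refine edist_le_lintegral_of_eventually (F := fun t => u (γ.toFun t))
    (g := fun t => ENNReal.ofReal (g (γ.toFun t))) (M := M) γ.hab ?_ fun t ht => ?_
  · intro t ht
    rw [← ENNReal.ofReal_coe_nnreal]
    exact ENNReal.ofReal_le_ofReal (hM t ht)
  · filter_upwards [(γ.tendsto ht).eventually (h t ht), self_mem_nhdsWithin] with s hs hmem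
    rw [← ENNReal.ofReal_mul (abs_nonneg _)]
    exact ENNReal.ofReal_le_ofReal (hs.trans (by gcongr; exacts [hg0 _, γ.dist_le hmem ht]))

/-- A path leaving a closed ball spends a positive amount of time outside the open ball. -/
lemma UPath.integral_eq_top (γ : UPath T) {ρ : T → ℝ≥0∞} {x : T} {R : ℝ}
    (hab : γ.a < γ.b) (hρ : ∀ y, y ∉ ball x R → ρ y = ⊤) {t : ℝ} (ht : t ∈ Icc γ.a γ.b)
    (hout : γ.toFun t ∉ closedBall x R) : γ.integral ρ = ⊤ := by
  rw [mem_closedBall, not_le] at hout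
  set η := dist (γ.toFun t) x - R with hη
  have hηpos : 0 < η := by linarith
  set J := Icc (max γ.a (t - η)) (min γ.b (t + η)) with hJ
  have hJsub : J ⊆ Icc γ.a γ.b := Icc_subset_Icc (le_max_left _ _) (min_le_left _ _)
  have hJpos : volume J ≠ 0 := by
    rw [hJ, Real.volume_Icc]
    have : max γ.a (t - η) < min γ.b (t + η) := by
      rw [max_lt_iff, lt_min_iff, lt_min_iff]
      exact ⟨⟨hab, by linarith [ht.1]⟩, ⟨by linarith [ht.2], by linarith⟩⟩
    exact (ENNReal.ofReal_pos.2 (sub_pos.2 this)).ne'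
  have htop : ∀ s ∈ J, ρ (γ.toFun s) = ⊤ := by
    intro s hs
    apply hρ
    rw [mem_ball, not_lt]
    have h1 := γ.dist_le (hJsub hs) ht
    have h2 : |s - t| ≤ η := by
      rw [abs_le]
      exact ⟨by linarith [(le_max_right _ _).trans hs.1],
          by linarith [hs.2.trans (min_le_right _ _)]⟩
    have h3 := dist_triangle_left (γ.toFun t) x (γ.toFun s)
    linarith
  rw [eq_top_iff]
  calc ⊤ = ∫⁻ _ in J, (⊤ : ℝ≥0∞) := by rw [setLIntegral_const, ENNReal.top_mul hJpos]
    _ ≤ ∫⁻ s in J, ρ (γ.toFun s) := setLIntegral_mono' measurableSet_Icc fun s hs => (htop s hs).ge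
    _ ≤ _ := lintegral_mono_set hJsub

variable [MeasurableSpace T] {μ : Measure T}

lemma exists_finset_cover {K : Set T} (hK : IsCompact K) {η : ℝ} (hη : 0 < η) {b : ℝ≥0∞}
    (hb : codimH μ K < b) :
    ∃ (F : Finset ℕ) (z : ℕ → T) (r : ℕ → ℝ), (∀ i ∈ F, 0 < r i) ∧ (∀ i ∈ F, r i ≤ η) ∧
      K ⊆ ⋃ i ∈ F, ball (z i) (r i) ∧
      ∑ i ∈ F, μ (ball (z i) (r i)) / ENNReal.ofReal (r i) ≤ b := by
  obtain ⟨z, r, hr, hcov, hlt⟩ :=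
    exists_cover_of_codimContent_lt ((codimContent_le_codimH μ hη K).trans_lt hb)
  obtain ⟨F, hF⟩ := hK.elim_finite_subcover _ (fun _ => isOpen_ball) hcov
  refine ⟨F.filter fun i => 0 < r i, z, r, fun i hi => (Finset.mem_filter.1 hi).2,
    fun i _ => hr i, fun y hy => ?_, (ENNReal.sum_le_tsum _).trans hlt.le⟩
  obtain ⟨i, hi, hyi⟩ := mem_iUnion₂.1 (hF hy)
  exact mem_iUnion₂.2 ⟨i, Finset.mem_filter.2 ⟨hi, pos_of_mem_ball hyi⟩, hyi⟩

variable [BorelSpace T] [CompactSpace T] {c : ℝ≥0} {CP lP : ℝ}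

/-- Relative isoperimetric inequality: a bounded function that is locally constant off a closed
set `S` has oscillation controlled by the codimension `1` measure of `S`. -/
theorem exists_lintegral_sub_le_codimH (hD : IsDoubling μ (c : ℝ≥0∞))
    (hP : SupportsPoincare μ CP lP) (hd : 0 < diam (univ : Set T)) {m : ℕ}
    (hm : 0 < lP → 1 ≤ 2 ^ m * lP) {x : T} {r : ℝ} (hr : 0 < r)
    (hr' : 2 ^ m * lP * r ≤ diam (univ : Set T)) {S : Set T} (hS : IsClosed S) {W : T → ℝ}
    (hW : Measurable W) (hW1 : ∀ y ∈ ball x (2 * (max lP 1 * r)), |W y| ≤ 1)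
    (hWS : ∀ y ∈ closedBall x (max lP 1 * r), y ∉ S → ∀ᶠ z in 𝓝 y, W z = W y) {b : ℝ≥0∞}
    (hb : codimH μ (S ∩ closedBall x (max lP 1 * r)) < b) :
    ∃ k : ℝ, ∫⁻ y in ball x r, ENNReal.ofReal |W y - k| ∂μ ≤
      ENNReal.ofReal r * ((2 * ENNReal.ofReal |CP| * (c : ℝ≥0∞) ^ m + 1) * (c : ℝ≥0∞) ^ 2 * b) := by
  classical
  have hfinite := hP.isFiniteMeasure
  set R := max lP 1 * r with hR
  have hrR : r ≤ R := by
    have := mul_le_mul_of_nonneg_right (le_max_right lP 1) hr.le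
    linarith
  have hRpos : 0 < R := hr.trans_le hrR
  have hK : IsCompact (S ∩ closedBall x R) := (hS.inter isClosed_closedBall).isCompact
  obtain ⟨F, z, s, hspos, hsle, hcov, hsum⟩ := exists_finset_cover hK
    (lt_min hr (by positivity : 0 < diam (univ : Set T) / 4)) hb
  have hs4 : ∀ i ∈ F, 2 ^ 2 * s i ≤ diam (univ : Set T) := fun i hi => by
    have := (hsle i hi).trans (min_le_right _ _); linarith
  have hsr : ∀ i ∈ F, s i ≤ r := fun i hi => (hsle i hi).trans (min_le_left _ _)
  set w := cutoff F z s with hw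
  set g := cutoffGrad F z s with hg
  have hball : ∀ a ≤ (4 : ℝ), ∀ i ∈ F, μ (ball (z i) (a * s i)) ≤
      (c : ℝ≥0∞) ^ 2 * μ (ball (z i) (s i)) := fun a ha i hi =>
    hD.measure_le_of_subset 2 (hspos i hi) (hs4 i hi) (ball_subset_ball (by
      have := mul_le_mul_of_nonneg_right ha (hspos i hi).le
      linarith))
  have hgint : ∫⁻ y, ENNReal.ofReal (g y) ∂μ ≤ (c : ℝ≥0∞) ^ 2 * b := by
    rw [hg, lintegral_cutoffGrad μ hspos]
    refine le_trans ?_ (mul_le_mul_right hsum _)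
    rw [Finset.mul_sum]
    refine Finset.sum_le_sum fun i hi => ?_
    rw [← mul_div_assoc]
    exact ENNReal.div_le_div_right (hball 3 (by norm_num) i hi) _
  have hwint : ∫⁻ y in ball x r, ENNReal.ofReal (w y) ∂μ ≤
      ENNReal.ofReal r * ((c : ℝ≥0∞) ^ 2 * b) := by
    refine (lintegral_cutoff_le μ hspos _).trans ?_
    refine le_trans ?_ (mul_le_mul_right (mul_le_mul_right hsum _) _)
    rw [Finset.mul_sum, Finset.mul_sum]
    refine Finset.sum_le_sum fun i hi => (hball 2 (by norm_num) i hi).trans ?_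
    have h1 : μ (ball (z i) (s i)) ≤
        ENNReal.ofReal r * (μ (ball (z i) (s i)) / ENNReal.ofReal (s i)) := by
      have h2 : ENNReal.ofReal (s i) ≠ 0 := by simpa using hspos i hi
      calc μ (ball (z i) (s i))
          = ENNReal.ofReal (s i) * (μ (ball (z i) (s i)) / ENNReal.ofReal (s i)) :=
            (ENNReal.mul_div_cancel h2 ENNReal.ofReal_ne_top).symm
        _ ≤ _ := by gcongr; exact hsr i hi
    calc _ ≤ (c : ℝ≥0∞) ^ 2 * (ENNReal.ofReal r *
          (μ (ball (z i) (s i)) / ENNReal.ofReal (s i))) := by gcongr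
      _ = _ := by ring
  let u : T → ℝ := (ball x (2 * R)).indicator fun y => (1 - w y) * W y
  have hwc : Continuous w := continuous_cutoff F z s
  have hum : Measurable u :=
    ((measurable_const.sub hwc.measurable).mul hW).indicator measurableSet_ball
  have hwu : ∀ y, |1 - w y| ≤ 1 := fun y => by
    have h1 := cutoff_nonneg F z s y
    have h2 := cutoff_le_one F z s y
    rw [abs_of_nonneg (by linarith)]; linarith
  have hu1 : ∀ y, ‖u y‖ ≤ 1 := by
    intro y
    by_cases hy : y ∈ ball x (2 * R)
    · simp only [u, indicator_of_mem hy, Real.norm_eq_abs, abs_mul]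
      exact mul_le_one₀ (hwu y) (abs_nonneg _) (hW1 y hy)
    · simp [u, indicator_of_notMem hy]
  have hui : Integrable u μ :=
    Integrable.of_bound hum.aestronglyMeasurable 1 (Eventually.of_forall hu1)
  have hlocal : ∀ y ∈ closedBall x R, ∀ᶠ y' in 𝓝 y, |u y' - u y| ≤ dist y' y * g y := by
    intro y hy
    have hy2 : y ∈ ball x (2 * R) := closedBall_subset_ball (by linarith) hy
    have hin : ∀ᶠ y' in 𝓝 y, y' ∈ ball x (2 * R) := isOpen_ball.mem_nhds hy2
    by_cases hyS : y ∈ S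
    · obtain ⟨i, hi, hyi⟩ := mem_iUnion₂.1 (hcov ⟨hyS, hy⟩)
      filter_upwards [isOpen_ball.mem_nhds hyi] with y' hy'
      have h0 : ∀ v ∈ ball (z i) (s i), u v = 0 := fun v hv => by
        have : w v = 1 := cutoff_eq_one hi hv
        by_cases hv : v ∈ ball x (2 * R) <;> simp [u, hv, this]
      rw [h0 y' hy', h0 y hyi, sub_zero, abs_zero]
      exact mul_nonneg dist_nonneg (cutoffGrad_nonneg hspos y)
    · filter_upwards [hin, hWS y hy hyS, eventually_abs_cutoff_sub_le (c := z) hspos y]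
        with y' h1 h2 h3
      simp only [u, indicator_of_mem hy2, indicator_of_mem h1, h2]
      rw [← sub_mul, abs_mul, sub_sub_sub_cancel_left, abs_sub_comm]
      exact (mul_le_of_le_one_right (abs_nonneg _) (hW1 y hy2)).trans h3
  let ρ : T → ℝ≥0∞ := (ball x R).piecewise (fun y => ENNReal.ofReal (g y)) fun _ => ⊤
  have hρm : Measurable ρ :=
    Measurable.piecewise measurableSet_ball measurable_cutoffGrad.ennreal_ofReal measurable_const
  have hρtop : ∀ y, y ∉ ball x R → ρ y = ⊤ := fun y hy => piecewise_eq_of_notMem _ _ _ hy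
  have hug : IsUpperGradient u ρ := by
    intro γ
    rcases γ.hab.eq_or_lt with hab | hab
    · have : γ.start = γ.finish := congrArg γ.toFun hab
      simp [this]
    by_cases hout : ∃ t ∈ Icc γ.a γ.b, γ.toFun t ∉ closedBall x R
    · obtain ⟨t, ht, hto⟩ := hout
      rw [γ.integral_eq_top hab hρtop ht hto]
      exact le_top
    · push Not at hout
      refine (γ.edist_le_integral (g := g) (M := (∑ i ∈ F, (s i)⁻¹).toNNReal)
        (cutoffGrad_nonneg hspos) (fun t _ => (cutoffGrad_le hspos _).trans
          (Real.le_coe_toNNReal _)) fun t ht => hlocal _ (hout t ht)).trans ?_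
      refine lintegral_mono fun t => ?_
      by_cases hy : γ.toFun t ∈ ball x R
      · have : ρ (γ.toFun t) = ENNReal.ofReal (g (γ.toFun t)) := piecewise_eq_of_mem _ _ _ hy
        exact this.ge
      · rw [hρtop _ hy]; exact le_top
  have hpoin := hP.lintegral_le hD hm (x := x) hr hr' hui.locallyIntegrable hρm hug
  have hρint : ∫⁻ y in ball x R, ρ y ∂μ ≤ (c : ℝ≥0∞) ^ 2 * b := by
    refine le_trans ?_ hgint
    refine le_trans (le_of_eq ?_) (setLIntegral_le_lintegral (ball x R) _)
    exact setLIntegral_congr_fun measurableSet_ball fun y hy => piecewise_eq_of_mem _ _ _ hy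
  refine ⟨⨍ y in ball x r, u y ∂μ, ?_⟩
  set k := ⨍ y in ball x r, u y ∂μ
  calc ∫⁻ y in ball x r, ENNReal.ofReal |W y - k| ∂μ
      ≤ ∫⁻ y in ball x r, (ENNReal.ofReal (w y) + ENNReal.ofReal |u y - k|) ∂μ := by
        refine setLIntegral_mono' measurableSet_ball fun y hy => ?_
        have hy2 : y ∈ ball x (2 * R) := ball_subset_ball (by linarith) hy
        rw [← ENNReal.ofReal_add (cutoff_nonneg F z s y) (abs_nonneg _)]
        apply ENNReal.ofReal_le_ofReal
        have h1 : W y - k = w y * W y + (u y - k) := by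
          simp only [u, indicator_of_mem hy2]; ring
        rw [h1]
        refine (abs_add_le _ _).trans ?_
        gcongr
        rw [abs_mul, abs_of_nonneg (cutoff_nonneg F z s y)]
        exact mul_le_of_le_one_right (cutoff_nonneg F z s y) (hW1 y hy2)
    _ = ∫⁻ y in ball x r, ENNReal.ofReal (w y) ∂μ +
          ∫⁻ y in ball x r, ENNReal.ofReal |u y - k| ∂μ :=
        lintegral_add_left hwc.measurable.ennreal_ofReal _
    _ ≤ ENNReal.ofReal r * ((c : ℝ≥0∞) ^ 2 * b) +
          ENNReal.ofReal (2 * |CP| * r) * (c : ℝ≥0∞) ^ m * ((c : ℝ≥0∞) ^ 2 * b) :=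
        add_le_add hwint (hpoin.trans (by gcongr))
    _ = _ := by
        rw [ENNReal.ofReal_mul (by positivity), ENNReal.ofReal_mul zero_le_two,
          ENNReal.ofReal_ofNat]
        ring

end Isoperimetric

section LiftedMeasure

variable {T Tt : Type*} [MetricSpace T] [MetricSpace Tt] {π : Tt → T} {τ : Tt → Tt} {p : ℝ}

lemma CoverSetup.eventually_dist_eq (hπ : CoverSetup π) (x : Tt) :
    ∀ᶠ z in 𝓝 x, dist (π z) (π x) = dist z x := by
  obtain ⟨ε, hε, h⟩ := hπ.2.2.1 x
  filter_upwards [ball_mem_nhds x hε] with z hz using h z hz x (mem_ball_self hε)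

lemma CoverSetup.continuous (hπ : CoverSetup π) : Continuous π := hπ.1.continuous

variable [MeasurableSpace T] [MeasurableSpace Tt] [BorelSpace Tt] {μ : Measure T} {μt : Measure Tt}

lemma IsLiftedMeasure.measure_lt_top [IsFiniteMeasure μ] (hπ : CoverSetup π)
    (hμt : IsLiftedMeasure π μ μt) {K : Set Tt} (hK : IsCompact K) : μt K < ⊤ := by
  refine hK.measure_lt_top_of_nhdsWithin fun x _ => ?_
  obtain ⟨ε, hε, h⟩ := hπ.2.2.1 x
  refine ⟨ball x ε, mem_nhdsWithin_of_mem_nhds (ball_mem_nhds x hε), ?_⟩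
  rw [hμt _ measurableSet_ball]
  calc ∫⁻ y, ((π ⁻¹' {y} ∩ ball x ε).encard : ℝ≥0∞) ∂μ ≤ ∫⁻ _, 1 ∂μ := by
        refine lintegral_mono fun y => ?_
        have : (π ⁻¹' {y} ∩ ball x ε).encard ≤ 1 := by
          rw [encard_le_one_iff]
          rintro a b ⟨ha, ha'⟩ ⟨hb, hb'⟩
          rw [← dist_eq_zero, ← h a ha' b hb', dist_eq_zero]
          exact (mem_singleton_iff.1 ha).trans (mem_singleton_iff.1 hb).symm
        simpa using ENat.toENNReal_le.2 this
    _ < ⊤ := by simp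

lemma pathMod_empty {X : Type*} [PseudoMetricSpace X] [MeasurableSpace X] (ν : Measure X)
    (hp : 0 < p) : pathMod ν p ∅ = 0 :=
  le_antisymm (iInf₂_le_of_le (fun _ => 0) ⟨measurable_const, by simp⟩
    (by simp [ENNReal.zero_rpow_of_pos hp])) bot_le

/-- Equivariant functions on the cover with a bounded pointwise Lipschitz bound coming from the
base give elements of `F`. -/
theorem memF_of_eventually_abs_sub_le [BorelSpace T] [IsFiniteMeasure μ] (hp : 0 < p)
    (hπ : CoverSetup π)
    (hμt : IsLiftedMeasure π μ μt) {G : T → ℝ≥0∞} (hG : Measurable G) {M : ℝ≥0}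
    (hGM : ∀ x, G x ≤ M) {f : Tt → ℝ} (hfτ : ∀ x, f (τ x) - f x = 1)
    (hf : ∀ x, ∀ᶠ z in 𝓝 x, |f z - f x| ≤ dist z x * (G (π x)).toReal) :
    MemF π τ μt p G := by
  have hcont : Continuous f := by
    refine continuous_iff_continuousAt.2 fun x => ?_
    rw [ContinuousAt, tendsto_iff_dist_tendsto_zero]
    have h0 : Tendsto (fun z => dist z x * (G (π x)).toReal) (𝓝 x) (𝓝 0) := by
      have : Continuous fun z => dist z x * (G (π x)).toReal := by fun_prop
      simpa using this.tendsto x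
    exact squeeze_zero' (Eventually.of_forall fun _ => dist_nonneg)
      ((hf x).mono fun z hz => by simpa [Real.dist_eq] using hz) h0
  have htop : ∀ x, G x ≠ ⊤ := fun x => ne_top_of_le_ne_top ENNReal.coe_ne_top (hGM x)
  have hug : ∀ γ : UPath Tt, edist (f γ.start) (f γ.finish) ≤ γ.integral (G ∘ π) := by
    intro γ
    have := γ.edist_le_integral (u := f) (g := fun y => (G (π y)).toReal) (M := M)
      (fun _ => ENNReal.toReal_nonneg)
      (fun t _ => by simpa using ENNReal.toReal_mono ENNReal.coe_ne_top (hGM (π (γ.toFun t))))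
      fun t _ => hf _
    simpa [ENNReal.ofReal_toReal (htop _), Function.comp_def] using this
  refine ⟨hG, f, fun U hU hUc => ?_, Eventually.of_forall hfτ, ?_⟩
  · have hμU : μt U < ⊤ := (measure_mono subset_closure).trans_lt (hμt.measure_lt_top hπ hUc)
    have hbound : ∀ {h : Tt → ℝ≥0∞} {b : ℝ≥0∞}, b ≠ ⊤ → (∀ x ∈ U, h x ≤ b) →
        ∫⁻ x in U, h x ^ p ∂μt < ⊤ := by
      intro h b hb hle
      calc ∫⁻ x in U, h x ^ p ∂μt ≤ ∫⁻ _ in U, b ^ p ∂μt :=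
            setLIntegral_mono' hU.measurableSet fun x hx =>
              ENNReal.rpow_le_rpow (hle x hx) hp.le
        _ = b ^ p * μt U := setLIntegral_const _ _
        _ < ⊤ := ENNReal.mul_lt_top (ENNReal.rpow_lt_top_of_nonneg hp.le hb) hμU
    constructor
    · obtain ⟨b, hb⟩ := hUc.exists_bound_of_continuousOn hcont.continuousOn
      exact hbound (b := ENNReal.ofReal b) ENNReal.ofReal_ne_top fun x hx =>
        ENNReal.ofReal_le_ofReal (hb x (subset_closure hx))
    · refine ⟨G ∘ π, hG.comp hπ.continuous.measurable, ?_,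
        hbound (b := M) ENNReal.coe_ne_top fun x _ => hGM _⟩
      simp only [IsWeakUpperGradientOn, hug, not_true_eq_false, and_false, ofPred_false]
      exact pathMod_empty _ hp
  · simp only [IsWeakUpperGradient, hug, not_true_eq_false, ofPred_false]
    exact pathMod_empty _ hp

end LiftedMeasure

section Tent

variable {T : Type*} [MetricSpace T]

/-- The tent function of radius `δ` centred at `x`. -/
def tent (δ : ℝ) (x y : T) : ℝ := max 0 (1 - dist x y / δ)

lemma tent_nonneg (δ : ℝ) (x y : T) : 0 ≤ tent δ x y := le_max_left _ _

lemma tent_le_one {δ : ℝ} (hδ : 0 < δ) (x y : T) : tent δ x y ≤ 1 :=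
  max_le zero_le_one (by have : 0 ≤ dist x y / δ := by positivity
                         linarith)

lemma continuous_tent (δ : ℝ) (x : T) : Continuous (tent δ x) := by
  unfold tent; fun_prop

lemma tent_eq_zero {δ : ℝ} (hδ : 0 < δ) {x y : T} (h : δ ≤ dist x y) : tent δ x y = 0 :=
  max_eq_left (by have := (one_le_div hδ).2 h; linarith)

lemma abs_tent_sub_le {δ : ℝ} (hδ : 0 < δ) (x x' y : T) :
    |tent δ x' y - tent δ x y| ≤ dist x' x / δ := by
  rw [tent, tent, max_comm 0, max_comm 0]
  refine (abs_max_sub_max_le_abs _ _ _).trans ?_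
  rw [sub_sub_sub_cancel_left, ← sub_div, abs_div, abs_of_pos hδ, abs_sub_comm]
  gcongr
  exact abs_dist_sub_le x' x y

variable [MeasurableSpace T] (μ : Measure T)

/-- The average of `g` against the tent function at `x`. -/
def tentAvg (δ : ℝ) (g : T → ℝ) (x : T) : ℝ :=
  (∫ y, tent δ x y * g y ∂μ) / ∫ y, tent δ x y ∂μ

variable {μ} [BorelSpace T]

lemma integrable_tent_mul {δ : ℝ} (hδ : 0 < δ) (x : T) {g : T → ℝ} (hg : Integrable g μ) :
    Integrable (fun y => tent δ x y * g y) μ :=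
  hg.bdd_mul (continuous_tent δ x).measurable.aestronglyMeasurable (c := 1)
    (Eventually.of_forall fun y => by
      rw [Real.norm_eq_abs, abs_of_nonneg (tent_nonneg _ _ _)]; exact tent_le_one hδ x y)

variable [IsFiniteMeasure μ]

lemma integrable_tent {δ : ℝ} (hδ : 0 < δ) (x : T) : Integrable (tent δ x) μ :=
  Integrable.of_bound (continuous_tent δ x).measurable.aestronglyMeasurable 1
    (Eventually.of_forall fun y => by
      rw [Real.norm_eq_abs, abs_of_nonneg (tent_nonneg _ _ _)]; exact tent_le_one hδ x y)

lemma half_measureReal_ball_le_integral_tent {δ : ℝ} (hδ : 0 < δ) (x : T) :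
    μ.real (ball x (δ / 2)) / 2 ≤ ∫ y, tent δ x y ∂μ := by
  have h1 : ∫ y, (ball x (δ / 2)).indicator (fun _ => (1 / 2 : ℝ)) y ∂μ =
      μ.real (ball x (δ / 2)) / 2 := by
    rw [integral_indicator measurableSet_ball, setIntegral_const, smul_eq_mul]; ring
  rw [← h1]
  refine integral_mono ((integrable_const _).indicator measurableSet_ball)
    (integrable_tent hδ x) fun y => ?_
  by_cases hy : y ∈ ball x (δ / 2)
  · rw [indicator_of_mem hy]
    refine le_max_of_le_right ?_
    rw [mem_ball, dist_comm] at hy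
    have : dist x y / δ < 1 / 2 := (div_lt_iff₀ hδ).2 (by linarith)
    linarith
  · rw [indicator_of_notMem hy]; exact tent_nonneg _ _ _

/-- The dependence of `tentAvg` on its base point is controlled by the oscillation. -/
lemma abs_tentAvg_sub_le {δ : ℝ} (hδ : 0 < δ) {x x' : T} (hx : dist x' x ≤ δ / 4)
    (hm : 0 < μ.real (ball x (δ / 4))) {A : ℝ}
    (hA : μ.real (ball x (2 * δ)) ≤ A * μ.real (ball x (δ / 4))) {g : T → ℝ}
    (hg : Integrable g μ) (k : ℝ) :
    |tentAvg μ δ g x' - tentAvg μ δ g x| ≤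
      dist x' x * ((2 + 4 * A) / (δ * μ.real (ball x (δ / 4)))) *
        ∫ y in ball x (2 * δ), |g y - k| ∂μ := by
  set m := μ.real (ball x (δ / 4))
  set K := ∫ y, tent δ x y ∂μ with hK
  set K' := ∫ y, tent δ x' y ∂μ with hK'
  set d := dist x' x with hd
  have hd0 : 0 ≤ d := dist_nonneg
  have hKm : m / 2 ≤ K := le_trans (by
    have : m ≤ μ.real (ball x (δ / 2)) := measureReal_mono (ball_subset_ball (by linarith))
    linarith) (half_measureReal_ball_le_integral_tent hδ x)
  have hKm' : m / 2 ≤ K' := le_trans (by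
    have : m ≤ μ.real (ball x' (δ / 2)) := measureReal_mono (ball_subset_ball' (by
      rw [dist_comm]; linarith))
    linarith) (half_measureReal_ball_le_integral_tent hδ x')
  have hKpos : 0 < K := by linarith
  have hKpos' : 0 < K' := by linarith
  have hout : ∀ y, y ∉ ball x (2 * δ) → tent δ x y = 0 ∧ tent δ x' y = 0 := by
    intro y hy
    rw [mem_ball, not_lt, dist_comm] at hy
    have h1 := dist_triangle_left x y x'
    exact ⟨tent_eq_zero hδ (by linarith), tent_eq_zero hδ (by linarith)⟩
  have hdiff : ∀ y, |tent δ x' y - tent δ x y| ≤ (ball x (2 * δ)).indicator (fun _ => d / δ) y := by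
    intro y
    by_cases hy : y ∈ ball x (2 * δ)
    · rw [indicator_of_mem hy]; exact abs_tent_sub_le hδ x x' y
    · rw [indicator_of_notMem hy, (hout y hy).1, (hout y hy).2]; simp
  have hKK : |K' - K| ≤ d / δ * (A * m) := by
    rw [hK, hK', ← integral_sub (integrable_tent hδ x') (integrable_tent hδ x)]
    refine (abs_integral_le_integral_abs).trans ?_
    refine (integral_mono_of_nonneg (Eventually.of_forall fun _ => abs_nonneg _)
      ((integrable_const _).indicator measurableSet_ball) (Eventually.of_forall hdiff)).trans ?_
    rw [integral_indicator measurableSet_ball, setIntegral_const, smul_eq_mul, mul_comm]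
    gcongr
  have hker : ∀ y, |tent δ x' y / K' - tent δ x y / K| ≤
      d * ((2 + 4 * A) / (δ * m)) := by
    intro y
    have e : tent δ x' y / K' - tent δ x y / K =
        (tent δ x' y - tent δ x y) / K' + tent δ x y * (K - K') / (K * K') := by
      field_simp; ring
    rw [e]
    refine (abs_add_le _ _).trans ?_
    rw [abs_div, abs_div, abs_mul, abs_mul, abs_of_pos hKpos, abs_of_pos hKpos',
      abs_of_nonneg (tent_nonneg _ _ _), abs_sub_comm K K']
    have h1 : |tent δ x' y - tent δ x y| / K' ≤ d / δ / (m / 2) := by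
      gcongr; exact abs_tent_sub_le hδ x x' y
    have h2 : tent δ x y * |K' - K| / (K * K') ≤ 1 * (d / δ * (A * m)) / (m / 2 * (m / 2)) := by
      have hAm : 0 ≤ A * m := measureReal_nonneg.trans hA
      gcongr
      exact tent_le_one hδ x y
    refine (add_le_add h1 h2).trans (le_of_eq ?_)
    field_simp; ring
  have havg : ∀ z, 0 < ∫ y, tent δ z y ∂μ → tentAvg μ δ g z - k =
      ∫ y, tent δ z y / (∫ y, tent δ z y ∂μ) * (g y - k) ∂μ := by
    intro z hz
    have e : ∀ y, tent δ z y / (∫ y, tent δ z y ∂μ) * (g y - k) =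
        (tent δ z y * g y - tent δ z y * k) / (∫ y, tent δ z y ∂μ) := fun y => by ring
    simp_rw [e]
    rw [integral_div, integral_sub (integrable_tent_mul hδ z hg)
      ((integrable_tent hδ z).mul_const k), integral_mul_const, tentAvg]
    field_simp
  have hint : ∀ z, Integrable (fun y => tent δ z y / (∫ y, tent δ z y ∂μ) * (g y - k)) μ := by
    intro z
    have := (integrable_tent_mul hδ z (hg.sub (integrable_const k))).div_const
      (∫ y, tent δ z y ∂μ)
    refine this.congr (Eventually.of_forall fun y => ?_)
    simp only [Pi.sub_apply]; ring
  rw [← sub_sub_sub_cancel_right _ _ k, havg x' hKpos', havg x hKpos,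
    ← integral_sub (hint x') (hint x)]
  refine (abs_integral_le_integral_abs).trans ?_
  rw [← integral_const_mul, ← integral_indicator measurableSet_ball]
  refine integral_mono_of_nonneg (Eventually.of_forall fun _ => abs_nonneg _)
    (((hg.sub (integrable_const k)).abs.const_mul _).indicator measurableSet_ball)
    (Eventually.of_forall fun y => ?_)
  by_cases hy : y ∈ ball x (2 * δ)
  · rw [indicator_of_mem hy]
    simp only
    rw [← sub_mul, abs_mul]
    gcongr
    exact hker y
  · rw [indicator_of_notMem hy]
    simp [(hout y hy).1, (hout y hy).2]

end Tent

section Competitor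

/-- The representative in `[a, a + 1)` of a point of the circle. -/
def circleRep (a : ℝ) (z : UnitAddCircle) : ℝ := AddCircle.equivIco 1 a z

lemma coe_circleRep (a : ℝ) (z : UnitAddCircle) : (circleRep a z : UnitAddCircle) = z :=
  AddCircle.coe_equivIco

lemma circleRep_mem (a : ℝ) (z : UnitAddCircle) : circleRep a z ∈ Ico a (a + 1) :=
  (AddCircle.equivIco 1 a z).2

lemma measurable_circleRep (a : ℝ) : Measurable (circleRep a) :=
  measurable_subtype_coe.comp (AddCircle.measurableEquivIco 1 a).measurable

lemma continuousAt_circleRep {a : ℝ} {z : UnitAddCircle} (hz : z ≠ a) :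
    ContinuousAt (circleRep a) z :=
  continuousAt_subtype_val.comp (AddCircle.continuousAt_equivIco 1 a hz)

lemma abs_circleRep_half (z : UnitAddCircle) : |circleRep (-(1 / 2)) z| = ‖z‖ := by
  have h := circleRep_mem (-(1 / 2)) z
  conv_rhs => rw [← coe_circleRep (-(1 / 2)) z]
  refine ((AddCircle.norm_coe_eq_abs_iff _ one_ne_zero).2 ?_).symm
  rw [abs_one, abs_le]
  exact ⟨h.1, by linarith [h.2]⟩

lemma exists_int_of_coe_eq_zero {t : ℝ} (h : (t : UnitAddCircle) = 0) : ∃ n : ℤ, (n : ℝ) = t := by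
  obtain ⟨n, hn⟩ := (AddCircle.coe_eq_zero_iff _).1 h
  exact ⟨n, by simpa using hn⟩

lemma eq_zero_of_coe_eq_zero {t : ℝ} (h : (t : UnitAddCircle) = 0) (ht : |t| < 1) : t = 0 := by
  obtain ⟨n, rfl⟩ := exists_int_of_coe_eq_zero h
  have : |n| < 1 := by exact_mod_cast ht
  simpa using Int.abs_lt_one_iff.1 this

lemma abs_le_one_of_coe_eq_zero {t : ℝ} (h : (t : UnitAddCircle) = 0) (ht : |t| < 2) :
    |t| ≤ 1 := by
  obtain ⟨n, rfl⟩ := exists_int_of_coe_eq_zero h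
  have : |n| < 2 := by exact_mod_cast ht
  exact_mod_cast Int.lt_add_one_iff.1 this

variable {T : Type*}

/-- The real-valued function `y ↦ θ(φ y - φ x) - [φ y] + [φ x]`, which is integer valued and jumps
only across the level set `φ⁻¹{0}` near `x`. -/
def jump (φ : T → UnitAddCircle) (x y : T) : ℝ :=
  circleRep (-(1 / 2)) (φ y - φ x) - circleRep 0 (φ y) + circleRep 0 (φ x)

lemma coe_jump (φ : T → UnitAddCircle) (x y : T) : (jump φ x y : UnitAddCircle) = 0 := by
  simp only [jump, AddCircle.coe_add, AddCircle.coe_sub, coe_circleRep]; abel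

lemma abs_jump_lt (φ : T → UnitAddCircle) (x y : T) : |jump φ x y| < ‖φ y - φ x‖ + 1 := by
  have h1 := circleRep_mem 0 (φ y)
  have h2 := circleRep_mem 0 (φ x)
  have h3 := abs_le.1 (abs_circleRep_half (φ y - φ x)).le
  rw [jump, abs_lt]
  constructor <;> linarith [h1.1, h1.2, h2.1, h2.2, h3.1, h3.2]

variable [TopologicalSpace T]

lemma eventually_jump_eq {φ : T → UnitAddCircle} (hφ : Continuous φ) {x y : T}
    (h : ‖φ y - φ x‖ < 1 / 4) (hy : φ y ≠ 0) : ∀ᶠ z in 𝓝 y, jump φ x z = jump φ x y := by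
  have hne : φ y - φ x ≠ ((-(1 / 2) : ℝ) : UnitAddCircle) := by
    intro he
    rw [he, (AddCircle.norm_coe_eq_abs_iff _ one_ne_zero).2 (by norm_num)] at h
    norm_num at h
  have hc : ContinuousAt (jump φ x) y := by
    refine ContinuousAt.add (ContinuousAt.sub ?_ ?_) continuousAt_const
    · exact (continuousAt_circleRep hne).comp (f := fun z => φ z - φ x)
        (hφ.sub continuous_const).continuousAt
    · exact (continuousAt_circleRep (by simpa using hy)).comp hφ.continuousAt
  filter_upwards [Metric.tendsto_nhds.1 hc 1 one_pos] with z hz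
  rw [Real.dist_eq] at hz
  exact sub_eq_zero.1 (eq_zero_of_coe_eq_zero (by simp [coe_jump]) hz)

variable [MeasurableSpace T] [BorelSpace T]

lemma measurable_jump {φ : T → UnitAddCircle} (hφ : Continuous φ) (x : T) :
    Measurable (jump φ x) :=
  (((measurable_circleRep _).comp (hφ.sub continuous_const).measurable).sub
    ((measurable_circleRep _).comp hφ.measurable)).add_const _

lemma integrable_jump {μ : Measure T} [IsFiniteMeasure μ] {φ : T → UnitAddCircle}
    (hφ : Continuous φ) (x : T) : Integrable (jump φ x) μ :=
  Integrable.of_bound (measurable_jump hφ x).aestronglyMeasurable 2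
    (Eventually.of_forall fun y => by
      have h1 := abs_jump_lt φ x y
      have h2 : ‖φ y - φ x‖ ≤ 1 / 2 := by
        simpa using AddCircle.norm_le_half_period (x := φ y - φ x) 1 one_ne_zero
      rw [Real.norm_eq_abs]; linarith)

end Competitor

section MemF

variable {T : Type*} [MetricSpace T] [MeasurableSpace T] {μ : Measure T}

lemma tentAvg_eq_add_const [BorelSpace T] [IsFiniteMeasure μ] {δ : ℝ} (hδ : 0 < δ) {x : T}
    (hx : 0 < ∫ y, tent δ x y ∂μ) {g h : T → ℝ} (hg : Integrable g μ) {κ : ℝ}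
    (hh : ∀ y ∈ ball x δ, h y = g y + κ) : tentAvg μ δ h x = tentAvg μ δ g x + κ := by
  have e : ∀ y, tent δ x y * h y = tent δ x y * g y + tent δ x y * κ := by
    intro y
    by_cases hy : y ∈ ball x δ
    · rw [hh y hy, mul_add]
    · rw [mem_ball, not_lt, dist_comm] at hy
      simp [tent_eq_zero hδ hy]
  simp_rw [tentAvg, e]
  rw [integral_add (integrable_tent_mul hδ x hg) ((integrable_tent hδ x).mul_const κ),
    integral_mul_const, add_div, mul_div_cancel_left₀ _ hx.ne']

lemma SupportsPoincare.integral_tent_pos {CP lP : ℝ} [BorelSpace T] [IsFiniteMeasure μ]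
    (hP : SupportsPoincare μ CP lP) {δ : ℝ} (hδ : 0 < δ) (x : T) : 0 < ∫ y, tent δ x y ∂μ := by
  have h := hP.1 x (δ / 2) (by positivity)
  have : 0 < μ.real (ball x (δ / 2)) := ENNReal.toReal_pos h.1.ne' h.2.ne
  exact lt_of_lt_of_le (by positivity) (half_measureReal_ball_le_integral_tent hδ x)

lemma SupportsPoincare.exists_le_measure_ball [CompactSpace T] {CP lP : ℝ}
    (hP : SupportsPoincare μ CP lP) {r : ℝ} (hr : 0 < r) :
    ∃ m : ℝ≥0∞, m ≠ 0 ∧ ∀ x, m ≤ μ (ball x r) := by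
  obtain ⟨t, -, hfin, ht⟩ := finite_cover_balls_of_compact (isCompact_univ (X := T))
    (half_pos hr)
  rcases t.eq_empty_or_nonempty with rfl | hne
  · exact ⟨1, one_ne_zero, fun x => by simpa using ht (mem_univ x)⟩
  obtain ⟨z₀, -, hz₀⟩ := exists_min_image t (fun z => μ (ball z (r / 2))) hfin hne
  refine ⟨_, (hP.1 z₀ (r / 2) (half_pos hr)).1.ne', fun x => ?_⟩
  obtain ⟨z, hz, hxz⟩ := mem_iUnion₂.1 (ht (mem_univ x))
  refine (hz₀ z hz).trans (measure_mono (ball_subset_ball' ?_))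
  rw [mem_ball, dist_comm] at hxz
  linarith

variable {Tt : Type*} [MetricSpace Tt] [BorelSpace T] [CompactSpace T] {π : Tt → T} {τ : Tt → Tt}
  {p : ℝ} {c : ℝ≥0} {CP lP : ℝ}

/-- The constant in the pointwise Lipschitz estimate for the competitor of a surface. -/
def gradConst (c : ℝ≥0) (CP : ℝ) (m : ℕ) : ℝ≥0∞ :=
  ENNReal.ofReal ((4 + 8 * c ^ 3) * c ^ 3) *
    ((2 * ENNReal.ofReal |CP| * (c : ℝ≥0∞) ^ m + 1) * (c : ℝ≥0∞) ^ 2)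

lemma gradConst_ne_top (c : ℝ≥0) (CP : ℝ) (m : ℕ) : gradConst c CP m ≠ ⊤ := by
  unfold gradConst; finiteness

/-- The competitor `φ̃ - [φ] + ⨍ (θ - [φ])` for the surface `φ⁻¹{0}`. -/
def competitor (μ : Measure T) (δ : ℝ) (φ : T → UnitAddCircle) (π : Tt → T) (φt : Tt → ℝ)
    (x : Tt) : ℝ :=
  φt x - circleRep 0 (φ (π x)) + tentAvg μ δ (jump φ (π x)) (π x)

lemma eventually_competitor_sub_eq (hP : SupportsPoincare μ CP lP) (hπ : CoverSetup π)
    {φ : T → UnitAddCircle} (hφ : Continuous φ) {φt : Tt → ℝ} (hφt : Continuous φt)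
    (hlift : ∀ x, (φt x : UnitAddCircle) = φ (π x)) {δ : ℝ} (hδ : 0 < δ)
    (hunif : ∀ x y, dist x y < 2 * δ → ‖φ y - φ x‖ < 1 / 4) (x : Tt) :
    ∀ᶠ z in 𝓝 x, competitor μ δ φ π φt z - competitor μ δ φ π φt x =
      tentAvg μ δ (jump φ (π x)) (π z) - tentAvg μ δ (jump φ (π x)) (π x) := by
  have hfin := hP.isFiniteMeasure
  have h1 := Metric.tendsto_nhds.1 (hφt.tendsto x) (1 / 4) (by norm_num)
  have h2 := Metric.tendsto_nhds.1 (hπ.continuous.tendsto x) δ hδ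
  filter_upwards [h1, h2] with z hz hz'
  have h3 : ∀ y ∈ ball (π z) δ, jump φ (π z) y = jump φ (π x) y +
      (φt x - circleRep 0 (φ (π x)) - (φt z - circleRep 0 (φ (π z)))) := by
    intro y hy
    rw [mem_ball, dist_comm] at hy
    have hzy := (abs_circleRep_half _).trans_lt (hunif (π z) y (by linarith))
    have hxy := (abs_circleRep_half _).trans_lt (hunif (π x) y (by
      have := dist_triangle_left (π x) y (π z); linarith))
    rw [Real.dist_eq] at hz
    have hzero := eq_zero_of_coe_eq_zero (t := φt z - φt x +
      (circleRep (-(1 / 2)) (φ y - φ (π z)) - circleRep (-(1 / 2)) (φ y - φ (π x)))) (by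
        simp only [AddCircle.coe_add, AddCircle.coe_sub, coe_circleRep, hlift]; abel) (by
        rw [abs_lt] at *; constructor <;> linarith [hzy.1, hzy.2, hxy.1, hxy.2, hz.1, hz.2])
    simp only [jump]
    linarith
  rw [competitor, competitor, tentAvg_eq_add_const hδ (hP.integral_tent_pos hδ _)
    (integrable_jump hφ (π x)) h3]
  ring

/-- Relative isoperimetric inequality for the jump function of `φ`. -/
lemma ofReal_abs_tentAvg_jump_sub_le (hD : IsDoubling μ (c : ℝ≥0∞))
    (hP : SupportsPoincare μ CP lP) (hd : 0 < diam (univ : Set T)) {m : ℕ}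
    (hm : 0 < lP → 1 ≤ 2 ^ m * lP) {r : ℝ} (hr : 0 < r)
    (hrd : r ≤ diam (univ : Set T)) (hr' : 2 ^ m * lP * r ≤ diam (univ : Set T))
    {φ : T → UnitAddCircle} (hφ : Continuous φ)
    (hunif : ∀ x y, dist x y < 2 * (max lP 1 * r) → ‖φ y - φ x‖ < 1 / 4) {x x' : T}
    (hx : dist x' x ≤ r / 8) (hfin : codimH μ (φ ⁻¹' {0}) < ⊤) :
    ENNReal.ofReal |tentAvg μ (r / 2) (jump φ x) x' - tentAvg μ (r / 2) (jump φ x) x| ≤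
      ENNReal.ofReal (dist x' x) * (gradConst c CP m *
        (codimH μ (φ ⁻¹' {0} ∩ closedBall x (max lP 1 * r)) / μ (ball x r))) := by
  have hfinite := hP.isFiniteMeasure
  have hlam : r ≤ max lP 1 * r := le_mul_of_one_le_left hr.le (le_max_right _ _)
  have hS : IsClosed (φ ⁻¹' {0}) := isClosed_singleton.preimage hφ
  set H := codimH μ (φ ⁻¹' {0} ∩ closedBall x (max lP 1 * r)) with hH
  have hHtop : H ≠ ⊤ := ((codimH_mono μ inter_subset_left).trans_lt hfin).ne
  have hball := hP.1 x r hr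
  have hball8 := hP.1 x (r / 8) (by positivity)
  have key : ∀ b, H < b →
      ENNReal.ofReal |tentAvg μ (r / 2) (jump φ x) x' - tentAvg μ (r / 2) (jump φ x) x| ≤
        ENNReal.ofReal (dist x' x) * (gradConst c CP m * (b / μ (ball x r))) := by
    intro b hb
    obtain ⟨k, hk⟩ := exists_lintegral_sub_le_codimH hD hP hd hm hr hr' hS
      (measurable_jump hφ x) (fun y hy => abs_le_one_of_coe_eq_zero (coe_jump φ x y) (by
        rw [mem_ball, dist_comm] at hy
        linarith [abs_jump_lt φ x y, hunif x y hy]))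
      (fun y hy hyS => eventually_jump_eq hφ (hunif x y (by
        rw [mem_closedBall, dist_comm] at hy; linarith)) hyS) hb
    have hpos8 : 0 < μ.real (ball x (r / 2 / 4)) := by
      rw [show r / 2 / 4 = r / 8 by ring]
      exact ENNReal.toReal_pos hball8.1.ne' hball8.2.ne
    have hpos : 0 < μ.real (ball x r) := ENNReal.toReal_pos hball.1.ne' hball.2.ne
    have hA : μ.real (ball x (2 * (r / 2))) ≤ (c : ℝ) ^ 3 * μ.real (ball x (r / 2 / 4)) := by
      have := hD.measure_le_of_subset 3 (x := x) (r := r / 2 / 4) (A := ball x (2 * (r / 2)))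
        (by positivity) (by linarith) (ball_subset_ball (by linarith))
      have h2 := ENNReal.toReal_mono (by finiteness) this
      simpa [Measure.real] using h2
    have hmain := abs_tentAvg_sub_le (half_pos hr) (x := x) (x' := x') (by linarith) hpos8 hA
      (integrable_jump hφ x) k
    rw [mul_div_cancel₀ r two_ne_zero] at hA hmain
    set M := μ.real (ball x r)
    set m8 := μ.real (ball x (r / 2 / 4))
    have hint : ENNReal.ofReal (∫ y in ball x r, |jump φ x y - k| ∂μ) =
        ∫⁻ y in ball x r, ENNReal.ofReal |jump φ x y - k| ∂μ :=
      ofReal_integral_eq_lintegral_ofReal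
        ((integrable_jump hφ x).sub (integrable_const k)).abs.integrableOn
        (Eventually.of_forall fun _ => abs_nonneg _)
    have hc : (2 + 4 * (c : ℝ) ^ 3) / (r / 2 * m8) * r ≤ (4 + 8 * c ^ 3) * c ^ 3 / M := by
      have e : (2 + 4 * (c : ℝ) ^ 3) / (r / 2 * m8) * r = (4 + 8 * c ^ 3) / m8 := by
        field_simp; ring
      rw [e, div_le_div_iff₀ hpos8 hpos, mul_assoc]
      gcongr
    calc _ ≤ ENNReal.ofReal (dist x' x * ((2 + 4 * (c : ℝ) ^ 3) / (r / 2 * m8)) *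
          ∫ y in ball x r, |jump φ x y - k| ∂μ) := ENNReal.ofReal_le_ofReal hmain
      _ = ENNReal.ofReal (dist x' x) * ENNReal.ofReal ((2 + 4 * (c : ℝ) ^ 3) / (r / 2 * m8)) *
          ∫⁻ y in ball x r, ENNReal.ofReal |jump φ x y - k| ∂μ := by
        rw [ENNReal.ofReal_mul (by positivity), ENNReal.ofReal_mul (by positivity), hint]
      _ ≤ ENNReal.ofReal (dist x' x) * ENNReal.ofReal ((2 + 4 * (c : ℝ) ^ 3) / (r / 2 * m8)) *
          (ENNReal.ofReal r *
            ((2 * ENNReal.ofReal |CP| * (c : ℝ≥0∞) ^ m + 1) * (c : ℝ≥0∞) ^ 2 * b)) := by gcongr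
      _ = ENNReal.ofReal (dist x' x) *
          (ENNReal.ofReal ((2 + 4 * (c : ℝ) ^ 3) / (r / 2 * m8) * r) *
            ((2 * ENNReal.ofReal |CP| * (c : ℝ≥0∞) ^ m + 1) * (c : ℝ≥0∞) ^ 2 * b)) := by
        rw [ENNReal.ofReal_mul (p := _ / _) (by positivity)]; ring
      _ ≤ ENNReal.ofReal (dist x' x) * (ENNReal.ofReal ((4 + 8 * c ^ 3) * c ^ 3 / M) *
            ((2 * ENNReal.ofReal |CP| * (c : ℝ≥0∞) ^ m + 1) * (c : ℝ≥0∞) ^ 2 * b)) := by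
        gcongr
      _ = _ := by
        rw [ENNReal.ofReal_div_of_pos hpos, ofReal_measureReal, gradConst]
        simp only [div_eq_mul_inv]; ring
  have hcont : Continuous fun b : ℝ≥0∞ =>
      ENNReal.ofReal (dist x' x) * (gradConst c CP m * (b / μ (ball x r))) :=
    (ENNReal.continuous_const_mul ENNReal.ofReal_ne_top).comp
      ((ENNReal.continuous_const_mul (gradConst_ne_top _ _ _)).comp
        (ENNReal.continuous_div_const _ hball.1.ne'))
  have : (𝓝[>] H).NeBot := nhdsGT_neBot_of_exists_gt ⟨⊤, hHtop.lt_top⟩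
  exact ge_of_tendsto (hcont.continuousWithinAt (s := Ioi H) (x := H)).tendsto
    (eventually_nhdsWithin_of_forall key)

lemma measurable_measure_closedBall (ν : Measure T) [SFinite ν] (R : ℝ) :
    Measurable fun x => ν (closedBall x R) := by
  have hs : MeasurableSet {q : T × T | dist q.2 q.1 ≤ R} :=
    (isClosed_le (by fun_prop) continuous_const).measurableSet
  exact measurable_measure_prodMk_left hs

lemma measurable_measure_ball (ν : Measure T) [SFinite ν] (R : ℝ) :
    Measurable fun x => ν (ball x R) := by
  have hs : MeasurableSet {q : T × T | dist q.2 q.1 < R} :=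
    (isOpen_lt (by fun_prop) continuous_const).measurableSet
  exact measurable_measure_prodMk_left hs

variable [MeasurableSpace Tt] [BorelSpace Tt] {μt : Measure Tt} {x₀ : T} {α₀ : Path x₀ x₀}

/-- The smeared-out codimension `1` measure of a surface, at every small scale, is an element
of `F`. -/
theorem exists_memF_codimH [LocallyPathConnectedSpace T] (hp : 0 < p)
    (hD : IsDoubling μ (c : ℝ≥0∞)) (hP : SupportsPoincare μ CP lP)
    (hd : 0 < diam (univ : Set T)) {m : ℕ} (hm : 0 < lP → 1 ≤ 2 ^ m * lP) (hπ : CoverSetup π)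
    (hτ : IsDeck π x₀ α₀ τ) (hμt : IsLiftedMeasure π μ μt) {φ : T → UnitAddCircle}
    (hφ : HasDegree x₀ α₀ φ 1) (hfin : codimH μ (φ ⁻¹' {0}) < ⊤) :
    ∃ r₀ > 0, ∀ r, 0 < r → r < r₀ → ∃ M : ℝ≥0,
      (∀ x, gradConst c CP m *
        (codimH μ (φ ⁻¹' {0} ∩ closedBall x (max lP 1 * r)) / μ (ball x r)) ≤ M) ∧
      MemF π τ μt p fun x => gradConst c CP m *
        (codimH μ (φ ⁻¹' {0} ∩ closedBall x (max lP 1 * r)) / μ (ball x r)) := by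
  have hfinite := hP.isFiniteMeasure
  have hφc : Continuous φ := hφ.1
  obtain ⟨φt, hlift, hequiv⟩ := exists_lift_of_hasDegree_one hπ hτ hφ
  have : Nonempty T := ⟨x₀⟩
  obtain ⟨η, hη, hη'⟩ := Metric.uniformContinuous_iff.1
    (CompactSpace.uniformContinuous_of_continuous hφc) (1 / 4) (by norm_num)
  set Λ := max lP 1
  have hΛ : 1 ≤ Λ := le_max_right _ _
  refine ⟨min (min (η / (2 * Λ)) (diam (univ : Set T)))
    (diam (univ : Set T) / (2 ^ m * Λ)), by positivity, fun r hr hlt => ?_⟩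
  obtain ⟨hlt, h3⟩ := lt_min_iff.1 hlt
  obtain ⟨h1, h2⟩ := lt_min_iff.1 hlt
  have hr' : 2 ^ m * lP * r ≤ diam (univ : Set T) := by
    rw [lt_div_iff₀ (by positivity)] at h3
    have : 2 ^ m * lP * r ≤ 2 ^ m * Λ * r := by gcongr; exact le_max_left _ _
    linarith
  have hunif : ∀ x y, dist x y < 2 * (Λ * r) → ‖φ y - φ x‖ < 1 / 4 := by
    intro x y hxy
    rw [lt_div_iff₀ (by positivity)] at h1
    rw [← dist_eq_norm, dist_comm]
    exact hη' (by linarith)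
  have hS : MeasurableSet (φ ⁻¹' {0}) := (isClosed_singleton.preimage hφc).measurableSet
  have hνS : IsFiniteMeasure ((codimMeasure μ).restrict (φ ⁻¹' {0})) :=
    ⟨by rw [Measure.restrict_apply_univ, codimMeasure_apply μ hS]; exact hfin⟩
  have hH : ∀ x, codimH μ (φ ⁻¹' {0} ∩ closedBall x (Λ * r)) =
      (codimMeasure μ).restrict (φ ⁻¹' {0}) (closedBall x (Λ * r)) := fun x => by
    rw [Measure.restrict_apply measurableSet_closedBall, inter_comm,
      codimMeasure_apply μ (measurableSet_closedBall.inter hS)]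
  obtain ⟨m₀, hm₀, hm₀'⟩ := hP.exists_le_measure_ball hr
  set G : T → ℝ≥0∞ := fun x => gradConst c CP m *
    (codimH μ (φ ⁻¹' {0} ∩ closedBall x (Λ * r)) / μ (ball x r)) with hG
  have hGm : Measurable G := by
    simp only [hG, hH]
    exact ((measurable_measure_closedBall _ _).div (measurable_measure_ball μ r)).const_mul _
  have hbtop : gradConst c CP m * (codimH μ (φ ⁻¹' {0}) / m₀) ≠ ⊤ :=
    ENNReal.mul_ne_top (gradConst_ne_top _ _ _) (ENNReal.div_ne_top hfin.ne hm₀)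
  have hGM : ∀ x, G x ≤ (gradConst c CP m * (codimH μ (φ ⁻¹' {0}) / m₀)).toNNReal := fun x => by
    rw [ENNReal.coe_toNNReal hbtop]
    exact mul_le_mul_right (ENNReal.div_le_div (codimH_mono μ inter_subset_left) (hm₀' x)) _
  refine ⟨_, hGM, memF_of_eventually_abs_sub_le hp hπ hμt hGm hGM
    (f := competitor μ (r / 2) φ π φt) (fun x => ?_) fun x => ?_⟩
  · simp only [competitor, hτ.2.1 x, hequiv]; ring
  · filter_upwards [eventually_competitor_sub_eq hP hπ hφc φt.continuous hlift (half_pos hr)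
      (fun x y hxy => hunif x y (by
        have : r ≤ Λ * r := le_mul_of_one_le_left hr.le hΛ
        linarith)) x, hπ.eventually_dist_eq x, ball_mem_nhds x (by positivity : 0 < r / 8)]
      with z h1 h2 h3
    rw [h1]
    have hGt : G (π x) ≠ ⊤ := ne_top_of_le_ne_top ENNReal.coe_ne_top (hGM _)
    have := ofReal_abs_tentAvg_jump_sub_le hD hP hd hm hr (by linarith) hr' hφc hunif
      (h2.trans_le (mem_ball.1 h3).le) hfin
    rw [h2] at this
    rw [← ENNReal.ofReal_le_ofReal_iff (by positivity), ENNReal.ofReal_mul dist_nonneg,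
      ENNReal.ofReal_toReal hGt]
    exact this

end MemF

section BallAverage

variable {T : Type*} [MetricSpace T] [MeasurableSpace T] (μ : Measure T)

/-- The average of `h` over the ball `B (y, s)`. -/
def ballAvg (s : ℝ) (h : T → ℝ≥0∞) (y : T) : ℝ≥0∞ := (∫⁻ x in ball y s, h x ∂μ) / μ (ball y s)

lemma measurable_setLIntegral_ball [BorelSpace T] [SecondCountableTopology T] [SFinite μ]
    {h : T → ℝ≥0∞} (hh : Measurable h) (s : ℝ) :
    Measurable fun y => ∫⁻ x in ball y s, h x ∂μ := by
  have hs : MeasurableSet {q : T × T | dist q.2 q.1 < s} :=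
    (isOpen_lt (by fun_prop) continuous_const).measurableSet
  have e : ∀ y, ∫⁻ x in ball y s, h x ∂μ =
      ∫⁻ x, {q : T × T | dist q.2 q.1 < s}.indicator (fun q => h q.2) (y, x) ∂μ := fun y => by
    rw [← lintegral_indicator measurableSet_ball]; rfl
  simp_rw [e]
  exact ((hh.comp measurable_snd).indicator hs).lintegral_prod_right'

lemma measurable_ballAvg [BorelSpace T] [SecondCountableTopology T] [CompactSpace T]
    [IsFiniteMeasure μ] {h : T → ℝ≥0∞} (hh : Measurable h) (s : ℝ) : Measurable (ballAvg μ s h) :=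
  (measurable_setLIntegral_ball μ hh s).div (measurable_measure_ball μ s)

lemma ballAvg_mono {s : ℝ} {h h' : T → ℝ≥0∞} {y : T} [OpensMeasurableSpace T]
    (hle : ∀ x ∈ ball y s, h x ≤ h' x) : ballAvg μ s h y ≤ ballAvg μ s h' y :=
  ENNReal.div_le_div_right (setLIntegral_mono' measurableSet_ball hle) _

lemma ballAvg_add {s : ℝ} {h h' : T → ℝ≥0∞} (hh : Measurable h) (y : T) :
    ballAvg μ s (fun x => h x + h' x) y = ballAvg μ s h y + ballAvg μ s h' y := by
  rw [ballAvg, lintegral_add_left hh, ENNReal.add_div]; rfl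

lemma ballAvg_const_le {s : ℝ} (a : ℝ≥0∞) (y : T) : ballAvg μ s (fun _ => a) y ≤ a := by
  rw [ballAvg, setLIntegral_const]
  exact ENNReal.div_le_of_le_mul le_rfl

lemma ballAvg_rpow_le {q : ℝ} (hq : 1 < q) {s : ℝ} {h : T → ℝ≥0∞} (hh : Measurable h) {y : T}
    (h0 : μ (ball y s) ≠ 0) (htop : μ (ball y s) ≠ ⊤) :
    ballAvg μ s h y ^ q ≤ ballAvg μ s (fun x => h x ^ q) y := by
  have hq0 : 0 < q := one_pos.trans hq
  have hqp := Real.HolderConjugate.conjExponent hq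
  have hold := ENNReal.lintegral_mul_le_Lp_mul_Lq (μ.restrict (ball y s)) hqp
    hh.aemeasurable (aemeasurable_const (b := (1 : ℝ≥0∞)))
  simp only [Pi.mul_apply, mul_one, ENNReal.one_rpow, lintegral_const, one_mul,
    Measure.restrict_apply_univ] at hold
  set m := μ (ball y s)
  have e : 1 / q.conjExponent * q = q - 1 := by
    rw [Real.conjExponent]; have : q - 1 ≠ 0 := by linarith
    field_simp
  calc ballAvg μ s h y ^ q
      ≤ ((∫⁻ x in ball y s, h x ^ q ∂μ) ^ (1 / q) * m ^ (1 / q.conjExponent) / m) ^ q := by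
        unfold ballAvg; gcongr
    _ = (∫⁻ x in ball y s, h x ^ q ∂μ) * (m ^ (q - 1) / m ^ q) := by
        rw [ENNReal.div_rpow_of_nonneg _ _ hq0.le, ENNReal.mul_rpow_of_nonneg _ _ hq0.le,
          ← ENNReal.rpow_mul, ← ENNReal.rpow_mul, one_div_mul_cancel hq0.ne', ENNReal.rpow_one, e,
          mul_div_assoc]
    _ = ballAvg μ s (fun x => h x ^ q) y := by
        rw [← ENNReal.rpow_sub _ _ h0 htop, sub_sub_cancel_left, ENNReal.rpow_neg_one]; rfl

variable {μ} [BorelSpace T] [CompactSpace T] {c : ℝ≥0} {CP lP : ℝ}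

lemma lintegral_mul_measure_eq (ν : Measure T) [IsFiniteMeasure μ] [IsFiniteMeasure ν]
    {h : T → ℝ≥0∞} (hh : Measurable h) {R : ℝ} :
    ∫⁻ x, h x * ν (closedBall x R) ∂μ = ∫⁻ y, ∫⁻ x in closedBall y R, h x ∂μ ∂ν := by
  have hs : MeasurableSet {q : T × T | dist q.2 q.1 ≤ R} :=
    (isClosed_le (by fun_prop) continuous_const).measurableSet
  have e1 : ∀ x, h x * ν (closedBall x R) =
      ∫⁻ y, {q : T × T | dist q.2 q.1 ≤ R}.indicator (fun q => h q.1) (x, y) ∂ν := fun x => by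
    rw [← setLIntegral_const, ← lintegral_indicator measurableSet_closedBall]; rfl
  have e2 : ∀ y, ∫⁻ x in closedBall y R, h x ∂μ =
      ∫⁻ x, {q : T × T | dist q.2 q.1 ≤ R}.indicator (fun q => h q.1) (x, y) ∂μ := fun y => by
    rw [← lintegral_indicator measurableSet_closedBall]
    refine lintegral_congr fun x => ?_
    classical
    rw [indicator_apply, indicator_apply]
    simp [dist_comm]
  simp_rw [e1, e2]
  exact lintegral_lintegral_swap ((hh.comp measurable_fst).indicator hs).aemeasurable

lemma inv_le_mul_inv_of_le_mul {a b A : ℝ≥0∞} (h0 : a ≠ 0) (htop : a ≠ ⊤) (h : a ≤ A * b) :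
    b⁻¹ ≤ A * a⁻¹ := by
  rw [← div_eq_mul_inv, ENNReal.le_div_iff_mul_le (Or.inl h0) (Or.inl htop)]
  calc b⁻¹ * a ≤ b⁻¹ * (A * b) := by gcongr
    _ = A * (b⁻¹ * b) := by ring
    _ ≤ A * 1 := by gcongr; exact ENNReal.inv_mul_le_one b
    _ = A := mul_one A

lemma lintegral_ballAvg_le (hD : IsDoubling μ (c : ℝ≥0∞)) (hP : SupportsPoincare μ CP lP)
    {s : ℝ} (hs : 0 < s) (hs' : 2 * s ≤ diam (univ : Set T)) {h : T → ℝ≥0∞} (hh : Measurable h) :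
    ∫⁻ y, ballAvg μ s h y ∂μ ≤ (c : ℝ≥0∞) ^ 2 * ∫⁻ x, h x ∂μ := by
  have hfin := hP.isFiniteMeasure
  have hpos := fun x => hP.1 x s hs
  have hm := measurable_measure_ball μ s
  have hdouble : ∀ (x : T) (A : Set T), A ⊆ ball x (2 * s) → μ A ≤ c * μ (ball x s) :=
      fun x A hA => by
    simpa using hD.measure_le_of_subset 1 hs (by simpa using hs') (by simpa using hA)
  calc ∫⁻ y, ballAvg μ s h y ∂μ
      ≤ ∫⁻ y, ∫⁻ x in closedBall y s, h x * (c * (μ (ball x s))⁻¹) ∂μ ∂μ := by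
        refine lintegral_mono fun y => ?_
        rw [ballAvg, div_eq_mul_inv, ← lintegral_mul_const _ hh]
        refine le_trans (setLIntegral_mono' measurableSet_ball fun x hx => ?_)
          (lintegral_mono_set ball_subset_closedBall)
        gcongr
        refine inv_le_mul_inv_of_le_mul (hpos x).1.ne' (hpos x).2.ne (hdouble y _ ?_)
        rw [mem_ball] at hx
        exact ball_subset_ball' (by linarith)
    _ = ∫⁻ x, h x * (c * (μ (ball x s))⁻¹) * μ (closedBall x s) ∂μ :=
        (lintegral_mul_measure_eq μ (hh.mul (hm.inv.const_mul _))).symm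
    _ ≤ ∫⁻ x, (c : ℝ≥0∞) ^ 2 * h x ∂μ := by
        refine lintegral_mono fun x => ?_
        calc h x * (c * (μ (ball x s))⁻¹) * μ (closedBall x s)
            ≤ h x * (c * (μ (ball x s))⁻¹) * (c * μ (ball x s)) := by
              gcongr
              exact hdouble x _ (closedBall_subset_ball (by linarith))
          _ = (c : ℝ≥0∞) ^ 2 * h x * ((μ (ball x s))⁻¹ * μ (ball x s)) := by ring
          _ ≤ (c : ℝ≥0∞) ^ 2 * h x * 1 := by gcongr; exact ENNReal.inv_mul_le_one _
          _ = _ := mul_one _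
    _ = _ := lintegral_const_mul _ hh

/-- Averaging over small balls is bounded on `L^q`. -/
lemma lintegral_ballAvg_rpow_le (hD : IsDoubling μ (c : ℝ≥0∞)) (hP : SupportsPoincare μ CP lP)
    {q : ℝ} (hq : 1 < q) {s : ℝ} (hs : 0 < s) (hs' : 2 * s ≤ diam (univ : Set T))
    {h : T → ℝ≥0∞} (hh : Measurable h) :
    ∫⁻ y, ballAvg μ s h y ^ q ∂μ ≤ (c : ℝ≥0∞) ^ 2 * ∫⁻ x, h x ^ q ∂μ :=
  (lintegral_mono fun y => ballAvg_rpow_le μ hq hh (hP.1 y s hs).1.ne' (hP.1 y s hs).2.ne).trans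
    (lintegral_ballAvg_le hD hP hs hs' (hh.pow_const q))

/-- The pairing with a smeared-out measure is controlled by the averages over balls. -/
lemma lintegral_mul_measure_div_le (hD : IsDoubling μ (c : ℝ≥0∞)) (hP : SupportsPoincare μ CP lP)
    (ν : Measure T) [IsFiniteMeasure ν] {l : ℕ} {r R : ℝ} (hr : 0 < r) (hR : 0 < R)
    (hrR : 3 * R ≤ 2 ^ l * r) (hl : 2 ^ l * r ≤ diam (univ : Set T)) {h : T → ℝ≥0∞}
    (hh : Measurable h) :
    ∫⁻ x, h x * (ν (closedBall x R) / μ (ball x r)) ∂μ ≤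
      (c : ℝ≥0∞) ^ l * ∫⁻ y, ballAvg μ (2 * R) h y ∂ν := by
  have hfin := hP.isFiniteMeasure
  have hm := measurable_measure_ball μ r
  have hpos := fun y => hP.1 y (2 * R) (by positivity)
  calc ∫⁻ x, h x * (ν (closedBall x R) / μ (ball x r)) ∂μ
      = ∫⁻ x, h x * (μ (ball x r))⁻¹ * ν (closedBall x R) ∂μ := by
        simp_rw [div_eq_mul_inv, mul_assoc, mul_comm (ν _)]
    _ = ∫⁻ y, ∫⁻ x in closedBall y R, h x * (μ (ball x r))⁻¹ ∂μ ∂ν :=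
        lintegral_mul_measure_eq ν (hh.mul hm.inv)
    _ ≤ ∫⁻ y, (c : ℝ≥0∞) ^ l * ballAvg μ (2 * R) h y ∂ν := by
        refine lintegral_mono fun y => ?_
        rw [ballAvg, div_eq_mul_inv, mul_comm (∫⁻ x in _, _ ∂_), ← mul_assoc,
          ← lintegral_const_mul _ hh]
        refine le_trans (setLIntegral_mono' measurableSet_closedBall fun x hx => ?_)
          (lintegral_mono_set (closedBall_subset_ball (by linarith)))
        rw [mul_comm]
        gcongr
        refine inv_le_mul_inv_of_le_mul (hpos y).1.ne' (hpos y).2.ne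
          (hD.measure_le_of_subset l hr hl (ball_subset_ball' ?_))
        rw [mem_closedBall, dist_comm] at hx
        linarith
    _ = _ := lintegral_const_mul _ (measurable_ballAvg μ hh _)

end BallAverage

section Approximation

variable {T : Type*} [MetricSpace T] [MeasurableSpace T] [BorelSpace T] {μ : Measure T}

lemma exists_continuous_lintegral_rpow_le [IsFiniteMeasure μ] {q : ℝ} (hq : 1 < q)
    {h : T → ℝ≥0∞} (hh : Measurable h) (hint : ∫⁻ x, h x ^ q ∂μ < ⊤) {ε : ℝ≥0∞} (hε : ε ≠ 0) :
    ∃ (g : T → ℝ) (D : T → ℝ≥0∞), Continuous g ∧ Measurable D ∧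
      (∀ x, h x ≤ ENNReal.ofReal (g x) + D x) ∧ (∀ x, ENNReal.ofReal (g x) ≤ h x + D x) ∧
      ∫⁻ x, D x ^ q ∂μ ≤ ε := by
  have hq0 : 0 < q := one_pos.trans hq
  have hqE0 : ENNReal.ofReal q ≠ 0 := (ENNReal.ofReal_pos.2 hq0).ne'
  have hmem : MemLp (fun x => (h x).toReal) (ENNReal.ofReal q) μ := by
    refine ⟨hh.ennreal_toReal.aestronglyMeasurable, ?_⟩
    rw [eLpNorm_lt_top_iff_lintegral_rpow_enorm_lt_top hqE0 ENNReal.ofReal_ne_top,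
      ENNReal.toReal_ofReal hq0.le]
    refine (lintegral_mono fun x => ?_).trans_lt hint
    rw [Real.enorm_of_nonneg ENNReal.toReal_nonneg]
    exact ENNReal.rpow_le_rpow ENNReal.ofReal_toReal_le hq0.le
  have hε' : ε ^ (1 / q) ≠ 0 := by simp [hε, hq0.le]
  obtain ⟨g, hg, -⟩ := hmem.exists_boundedContinuous_eLpNorm_sub_le ENNReal.ofReal_ne_top hε'
  have hae : ∀ᵐ x ∂μ, h x ≠ ⊤ := by
    filter_upwards [ae_lt_top (hh.pow_const q) hint.ne] with x hx
    rintro he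
    simp [he, hq0] at hx
  have htop : MeasurableSet {x | h x = ⊤} := hh (measurableSet_singleton ⊤)
  refine ⟨g, fun x => ‖(h x).toReal - g x‖ₑ + {x | h x = ⊤}.indicator (fun _ => ⊤) x, g.continuous,
    (hh.ennreal_toReal.sub g.continuous.measurable).enorm.add (measurable_const.indicator htop),
    fun x => ?_, fun x => ?_, ?_⟩
  · by_cases hx : h x = ⊤
    · simp [indicator, hx]
    · calc h x = ENNReal.ofReal (g x + ((h x).toReal - g x)) := by
            rw [add_sub_cancel, ENNReal.ofReal_toReal hx]
        _ ≤ ENNReal.ofReal (g x) + ENNReal.ofReal ((h x).toReal - g x) := ENNReal.ofReal_add_le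
        _ ≤ _ := by
            gcongr
            refine le_add_right ?_
            rw [Real.enorm_eq_ofReal_abs]
            exact ENNReal.ofReal_le_ofReal (le_abs_self _)
  · by_cases hx : h x = ⊤
    · simp [hx]
    · calc ENNReal.ofReal (g x) = ENNReal.ofReal ((h x).toReal + (g x - (h x).toReal)) := by
            rw [add_sub_cancel]
        _ ≤ ENNReal.ofReal (h x).toReal + ENNReal.ofReal (g x - (h x).toReal) :=
            ENNReal.ofReal_add_le
        _ ≤ _ := by
            rw [ENNReal.ofReal_toReal hx]
            gcongr
            refine le_add_right ?_
            rw [Real.enorm_eq_ofReal_abs, abs_sub_comm]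
            exact ENNReal.ofReal_le_ofReal (le_abs_self _)
  · rw [eLpNorm_eq_lintegral_rpow_enorm_toReal hqE0 ENNReal.ofReal_ne_top,
      ENNReal.toReal_ofReal hq0.le, ENNReal.rpow_le_rpow_iff (by positivity)] at hg
    refine le_trans (le_of_eq (lintegral_congr_ae ?_)) hg
    filter_upwards [hae] with x hx
    simp [indicator, hx]

/-- Averages over small balls are bounded by the function itself up to a small error in `L^q`. -/
lemma exists_ballAvg_le [CompactSpace T] {c : ℝ≥0} {CP lP : ℝ} (hD : IsDoubling μ (c : ℝ≥0∞))
    (hP : SupportsPoincare μ CP lP) (hd : 0 < diam (univ : Set T)) {q : ℝ} (hq : 1 < q)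
    {h : T → ℝ≥0∞} (hh : Measurable h) (hint : ∫⁻ x, h x ^ q ∂μ < ⊤) {ε : ℝ≥0∞} (hε : ε ≠ 0)
    {η : ℝ} (hη : 0 < η) :
    ∃ s₁ > 0, ∀ s, 0 < s → s < s₁ → ∃ D : T → ℝ≥0∞, Measurable D ∧
      (∀ y, ballAvg μ s h y ≤ h y + ENNReal.ofReal η + D y) ∧ ∫⁻ x, D x ^ q ∂μ ≤ ε := by
  have hfin := hP.isFiniteMeasure
  set K : ℝ≥0∞ := 2 ^ (q - 1) * (1 + (c : ℝ≥0∞) ^ 2) with hK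
  have hKtop : K ≠ ⊤ := ENNReal.mul_ne_top
    (ENNReal.rpow_ne_top_of_nonneg (by linarith) (by simp)) (by finiteness)
  obtain ⟨g, D, hg, hDm, h1, h2, h3⟩ := exists_continuous_lintegral_rpow_le hq hh hint
    (ENNReal.div_ne_zero.2 ⟨hε, hKtop⟩)
  obtain ⟨s₁, hs₁, hunif⟩ := Metric.uniformContinuous_iff.1
    (CompactSpace.uniformContinuous_of_continuous hg) η hη
  refine ⟨min s₁ (diam (univ : Set T) / 2), by positivity, fun s hs hlt => ?_⟩
  obtain ⟨hlt1, hlt2⟩ := lt_min_iff.1 hlt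
  have hPD := measurable_ballAvg μ hDm s
  refine ⟨fun y => D y + ballAvg μ s D y, hDm.add hPD, fun y => ?_, ?_⟩
  · calc ballAvg μ s h y
        ≤ ballAvg μ s (fun x => (h y + D y + ENNReal.ofReal η) + D x) y := by
          refine ballAvg_mono μ fun x hx => (h1 x).trans ?_
          gcongr
          have hgx : g x ≤ g y + η := by
            have := hunif ((mem_ball.1 hx).trans hlt1)
            rw [Real.dist_eq, abs_lt] at this
            linarith
          calc ENNReal.ofReal (g x) ≤ ENNReal.ofReal (g y + η) := ENNReal.ofReal_le_ofReal hgx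
            _ ≤ ENNReal.ofReal (g y) + ENNReal.ofReal η := ENNReal.ofReal_add_le
            _ ≤ _ := by gcongr; exact h2 y
      _ = ballAvg μ s (fun _ => h y + D y + ENNReal.ofReal η) y + ballAvg μ s D y :=
          ballAvg_add μ measurable_const y
      _ ≤ h y + D y + ENNReal.ofReal η + ballAvg μ s D y := by
          gcongr; exact ballAvg_const_le μ _ y
      _ = _ := by ring
  · calc ∫⁻ y, (D y + ballAvg μ s D y) ^ q ∂μ
        ≤ ∫⁻ y, 2 ^ (q - 1) * (D y ^ q + ballAvg μ s D y ^ q) ∂μ :=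
          lintegral_mono fun y => ENNReal.rpow_add_le_mul_rpow_add_rpow _ _ hq.le
      _ = 2 ^ (q - 1) * (∫⁻ y, D y ^ q ∂μ + ∫⁻ y, ballAvg μ s D y ^ q ∂μ) := by
          rw [lintegral_const_mul' _ _ (ENNReal.rpow_ne_top_of_nonneg (by linarith) (by simp)),
            lintegral_add_left (hDm.pow_const q)]
      _ ≤ 2 ^ (q - 1) * (ε / K + (c : ℝ≥0∞) ^ 2 * (ε / K)) := by
          gcongr
          exact (lintegral_ballAvg_rpow_le hD hP hq hs (by linarith) hDm).trans (by gcongr)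
      _ = K * (ε / K) := by rw [hK]; ring
      _ ≤ ε := ENNReal.mul_div_le

end Approximation

section WeakAdmissibility

variable {T : Type*} [MetricSpace T] [MeasurableSpace T] [BorelSpace T] {μ : Measure T}

/-- Along a suitable sequence of radii tending to zero, ball averages of an `L^q` function converge
to it with a rate controlled by a single `L^q` function. -/
lemma exists_seq_ballAvg_le [CompactSpace T] {c : ℝ≥0} {CP lP : ℝ}
    (hD : IsDoubling μ (c : ℝ≥0∞)) (hP : SupportsPoincare μ CP lP)
    (hd : 0 < diam (univ : Set T)) {q : ℝ} (hq : 1 < q)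
    {h : T → ℝ≥0∞} (hh : Measurable h) (hint : ∫⁻ x, h x ^ q ∂μ < ⊤) :
    ∃ (s : ℕ → ℝ) (G : T → ℝ≥0∞), (∀ n, 0 < s n) ∧ Tendsto s atTop (𝓝 0) ∧ Measurable G ∧
      ∫⁻ x, G x ^ q ∂μ < ⊤ ∧
      ∀ n y, ballAvg μ (s n) h y ≤ h y + 2⁻¹ ^ n + 2⁻¹ ^ n * G y := by
  have hq0 : 0 < q := one_pos.trans hq
  have htwo (n : ℕ) : ((2 : ℝ≥0∞) ^ n) ^ q ≠ ⊤ := ENNReal.rpow_ne_top_of_nonneg hq0.le (by simp)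
  have key (n : ℕ) : ∃ (s : ℝ) (D : T → ℝ≥0∞), 0 < s ∧ s < 1 / ((n : ℝ) + 1) ∧ Measurable D ∧
      (∀ y, ballAvg μ s h y ≤ h y + 2⁻¹ ^ n + D y) ∧
      ∫⁻ x, D x ^ q ∂μ ≤ 2⁻¹ ^ n / ((2 : ℝ≥0∞) ^ n) ^ q := by
    obtain ⟨s₁, hs₁, H⟩ := exists_ballAvg_le hD hP hd hq hh hint
      (ε := 2⁻¹ ^ n / ((2 : ℝ≥0∞) ^ n) ^ q) (ENNReal.div_ne_zero.2 ⟨by simp, htwo n⟩)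
      (η := (2⁻¹ : ℝ) ^ n) (by positivity)
    obtain ⟨s, hs, hlt⟩ := exists_between (show 0 < min s₁ (1 / ((n : ℝ) + 1)) by positivity)
    obtain ⟨D, hDm, h1, h2⟩ := H s hs (hlt.trans_le (min_le_left _ _))
    refine ⟨s, D, hs, hlt.trans_le (min_le_right _ _), hDm, fun y => (h1 y).trans_eq ?_, h2⟩
    rw [ENNReal.ofReal_pow (by positivity), ENNReal.ofReal_inv_of_pos two_pos,
      ENNReal.ofReal_ofNat]
  choose s D hs hlt hDm hle hDint using key
  have hm : Measurable fun x => ∑' n, (2 ^ n * D n x) ^ q :=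
    Measurable.tsum fun n => ((hDm n).const_mul _).pow_const q
  refine ⟨s, fun x => (∑' n, (2 ^ n * D n x) ^ q) ^ q⁻¹, hs,
    squeeze_zero (fun n => (hs n).le) (fun n => (hlt n).le)
      tendsto_one_div_add_atTop_nhds_zero_nat, hm.pow_const _, ?_, fun n y => ?_⟩
  · calc ∫⁻ x, ((∑' n, (2 ^ n * D n x) ^ q) ^ q⁻¹) ^ q ∂μ
        = ∫⁻ x, ∑' n, (2 ^ n * D n x) ^ q ∂μ := by
          simp_rw [ENNReal.rpow_inv_rpow hq0.ne']
      _ = ∑' n, ∫⁻ x, (2 ^ n * D n x) ^ q ∂μ :=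
          lintegral_tsum fun n => (((hDm n).const_mul _).pow_const q).aemeasurable
      _ ≤ ∑' n : ℕ, 2⁻¹ ^ n := by
          refine ENNReal.tsum_le_tsum fun n => ?_
          simp_rw [ENNReal.mul_rpow_of_nonneg _ _ hq0.le]
          rw [lintegral_const_mul' _ _ (htwo n)]
          exact (mul_le_mul_right (hDint n) _).trans ENNReal.mul_div_le
      _ < ⊤ := by simp [ENNReal.tsum_geometric, ENNReal.one_sub_inv_two]
  · refine (hle n y).trans ?_
    gcongr
    calc D n y = 2⁻¹ ^ n * (2 ^ n * D n y) := by
          rw [← mul_assoc, ← mul_pow, ENNReal.inv_mul_cancel (by simp) (by simp), one_pow, one_mul]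
      _ = 2⁻¹ ^ n * ((2 ^ n * D n y) ^ q) ^ q⁻¹ := by rw [ENNReal.rpow_rpow_inv hq0.ne']
      _ ≤ _ := by
          exact mul_le_mul_right (ENNReal.rpow_le_rpow
            (ENNReal.le_tsum (f := fun n => (2 ^ n * D n y) ^ q) n) (inv_nonneg.2 hq0.le)) _

/-- Fuglede's lemma for surfaces: an `L^q` function has finite integral over all surfaces outside
a family of zero modulus. -/
lemma surfModOf_setOf_choquetIntegral_eq_top [Nonempty T] {q : ℝ} (hq : 0 < q) {G : T → ℝ≥0∞}
    (hG : Measurable G) (hint : ∫⁻ x, G x ^ q ∂μ < ⊤) {𝒮 : Set (Set T)}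
    (hS : ∀ S ∈ 𝒮, MeasurableSet S ∧ codimH μ S < ⊤) :
    surfModOf μ q {S ∈ 𝒮 | choquetIntegral μ S G = ⊤} = 0 := by
  have key (ε : ℝ≥0∞) (hε : ε ≠ 0) (hε' : ε ≠ ⊤) :
      surfModOf μ q {S ∈ 𝒮 | choquetIntegral μ S G = ⊤} ≤ ε ^ q * ∫⁻ x, G x ^ q ∂μ := by
    have hadm : ∀ S ∈ {S ∈ 𝒮 | choquetIntegral μ S G = ⊤},
        1 ≤ choquetIntegral μ S fun x => ε * G x := by
      rintro S ⟨hS', htop⟩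
      obtain ⟨hm, hf⟩ := hS S hS'
      rw [choquetIntegral_eq_lintegral μ hm hf hG] at htop
      rw [choquetIntegral_eq_lintegral μ hm hf (hG.const_mul ε), lintegral_const_mul _ hG, htop,
        ENNReal.mul_top hε]
      exact le_top
    refine (iInf₂_le _ ⟨hG.const_mul ε, hadm⟩).trans_eq ?_
    simp_rw [ENNReal.mul_rpow_of_nonneg _ _ hq.le]
    exact lintegral_const_mul' _ _ (ENNReal.rpow_ne_top_of_nonneg hq.le hε')
  have h0 : Tendsto (fun n : ℕ => (2 : ℝ≥0∞)⁻¹ ^ n) atTop (𝓝 0) :=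
    ENNReal.tendsto_pow_atTop_nhds_zero_of_lt_one (by simp)
  have h1 := ((ENNReal.continuous_rpow_const (y := q)).tendsto 0).comp h0
  rw [ENNReal.zero_rpow_of_pos hq] at h1
  refine le_antisymm (ge_of_tendsto' (ENNReal.Tendsto.mul_const h1 (Or.inr hint.ne)) fun n =>
    key (2⁻¹ ^ n) (by simp) (by finiteness)) ?_ |>.trans (zero_mul _)
  simp

lemma measurableSet_and_codimH_lt_top_of_mem_surfaces {x₀ : T} {α₀ : Path x₀ x₀} {S : Set T}
    (hS : S ∈ Surfaces μ x₀ α₀) : MeasurableSet S ∧ codimH μ S < ⊤ := by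
  obtain ⟨φ, ⟨hφ, -⟩, rfl, hf⟩ := hS
  exact ⟨(isClosed_singleton.preimage hφ).measurableSet, hf⟩

end WeakAdmissibility

lemma cap_lt_top {T : Type*} [MetricSpace T] [MeasurableSpace T] {μ : Measure T}
    [IsFiniteMeasure μ] {p : ℝ} (hp : 0 < p) {x₀ : T} {α₀ : Path x₀ x₀}
    {f : T → UnitAddCircle} (hf : DegOneLip x₀ α₀ f) : cap μ p x₀ α₀ < ⊤ := by
  obtain ⟨⟨L, hL⟩, -⟩ := id hf
  have hup : IsWeakUpperGradient μ p f fun _ => (L : ℝ≥0∞) := by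
    have : {γ : UPath T | ¬ edist (f γ.start) (f γ.finish) ≤
        γ.integral fun _ => (L : ℝ≥0∞)} = ∅ := by
      refine eq_empty_of_forall_notMem fun γ hγ => hγ ?_
      calc edist (f γ.start) (f γ.finish) ≤ L * edist γ.start γ.finish := hL _ _
        _ ≤ L * ENNReal.ofReal (γ.b - γ.a) := by
            gcongr
            have := γ.lip (left_mem_Icc.2 γ.hab) (right_mem_Icc.2 γ.hab)
            rwa [ENNReal.coe_one, one_mul, edist_comm γ.a, edist_dist γ.b, Real.dist_eq,
              abs_of_nonneg (sub_nonneg.2 γ.hab)] at this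
        _ = _ := by simp [UPath.integral]
    rw [IsWeakUpperGradient, this, pathMod_empty _ hp]
  refine ((iInf₂_le f hf).trans (iInf₂_le _ ⟨measurable_const, hup⟩)).trans_lt ?_
  rw [lintegral_const]
  exact ENNReal.mul_lt_top (ENNReal.rpow_lt_top_of_nonneg hp.le (by simp)) (measure_lt_top _ _)

section Capacity

variable {T Tt : Type*} [MetricSpace T] [MeasurableSpace T] [BorelSpace T] [CompactSpace T]
  [MetricSpace Tt] [MeasurableSpace Tt] [BorelSpace Tt] {μ : Measure T} {μt : Measure Tt}
  {c : ℝ≥0} {CP lP p : ℝ} {x₀ : T} {α₀ : Path x₀ x₀} {π : Tt → T} {τ : Tt → Tt}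

/-- A first variation inequality for `h` against `F` bounds the constant by the integrals over
a surface of the averages of `h` over small balls. -/
lemma eventually_le_lintegral_ballAvg [LocallyPathConnectedSpace T] (hp : 0 < p)
    (hD : IsDoubling μ (c : ℝ≥0∞)) (hP : SupportsPoincare μ CP lP)
    (hd : 0 < diam (univ : Set T)) {m l : ℕ} (hm : 0 < lP → 1 ≤ 2 ^ m * lP)
    (hl : 3 * max lP 1 ≤ 2 ^ l) (hπ : CoverSetup π)
    (hτ : IsDeck π x₀ α₀ τ) (hμt : IsLiftedMeasure π μ μt) {h : T → ℝ≥0∞} (hh : Measurable h)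
    {a : ℝ≥0∞} (ha : ∀ ρ : T → ℝ≥0∞, MemF π τ μt p ρ → (∫⁻ x, ρ x ^ p ∂μ) < ⊤ →
      a ≤ ∫⁻ x, h x * ρ x ∂μ) {S : Set T} (hS : S ∈ Surfaces μ x₀ α₀) [Nonempty T] :
    ∀ᶠ s in 𝓝[>] (0 : ℝ), a ≤
      gradConst c CP m * c ^ l * ∫⁻ y in S, ballAvg μ s h y ∂(codimMeasure μ) := by
  have hfinite := hP.isFiniteMeasure
  obtain ⟨hSm, -⟩ := measurableSet_and_codimH_lt_top_of_mem_surfaces hS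
  obtain ⟨φ, hφ, rfl, hfin⟩ := hS
  set S : Set T := φ ⁻¹' {0}
  have hνS : IsFiniteMeasure ((codimMeasure μ).restrict S) :=
    ⟨by rw [Measure.restrict_apply_univ, codimMeasure_apply μ hSm]; exact hfin⟩
  obtain ⟨r₀, hr₀, H⟩ := exists_memF_codimH hp hD hP hd hm hπ hτ hμt hφ hfin
  have hΛ : 0 < max lP 1 := by positivity
  have hpos : 0 < min (2 * max lP 1 * r₀) (2 * max lP 1 * (diam (univ : Set T) / 2 ^ l)) := by
    positivity
  filter_upwards [Ioo_mem_nhdsGT hpos] with s hs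
  obtain ⟨hs1, hs2⟩ := lt_min_iff.1 hs.2
  obtain ⟨r, rfl⟩ : ∃ r, s = 2 * max lP 1 * r := ⟨s / (2 * max lP 1), by field_simp⟩
  have hr : 0 < r := pos_of_mul_pos_right hs.1 (by positivity)
  have hr1 : r < r₀ := lt_of_mul_lt_mul_left hs1 (by positivity)
  have hr2 : 2 ^ l * r ≤ diam (univ : Set T) := by
    have := lt_of_mul_lt_mul_left hs2 (by positivity)
    rw [lt_div_iff₀ (by positivity)] at this
    linarith
  obtain ⟨M, hM, hF⟩ := H r hr hr1
  have hint : ∫⁻ x, (gradConst c CP m *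
      (codimH μ (S ∩ closedBall x (max lP 1 * r)) / μ (ball x r))) ^ p ∂μ < ⊤ := by
    refine (lintegral_mono fun x => ENNReal.rpow_le_rpow (hM x) hp.le).trans_lt ?_
    rw [lintegral_const]
    exact ENNReal.mul_lt_top (ENNReal.rpow_lt_top_of_nonneg hp.le (by simp)) (measure_lt_top _ _)
  have hH : ∀ x, codimH μ (S ∩ closedBall x (max lP 1 * r)) =
      (codimMeasure μ).restrict S (closedBall x (max lP 1 * r)) := fun x => by
    rw [Measure.restrict_apply measurableSet_closedBall, inter_comm,
      codimMeasure_apply μ (measurableSet_closedBall.inter hSm)]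
  calc a ≤ _ := ha _ hF hint
    _ = gradConst c CP m * ∫⁻ x, h x *
          ((codimMeasure μ).restrict S (closedBall x (max lP 1 * r)) / μ (ball x r)) ∂μ := by
        rw [← lintegral_const_mul' _ _ (gradConst_ne_top _ _ _)]
        exact lintegral_congr fun x => by rw [hH, mul_left_comm]
    _ ≤ gradConst c CP m *
          (c ^ l * ∫⁻ y in S, ballAvg μ (2 * (max lP 1 * r)) h y ∂(codimMeasure μ)) := by
        gcongr
        exact lintegral_mul_measure_div_le hD hP _ hr (by positivity)
          (by nlinarith) hr2 hh
    _ = _ := by rw [← mul_assoc, ← mul_assoc]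

/-- A first variation inequality for `h` against `F` bounds the constant by the integrals of `h`
over almost every surface. -/
theorem exists_surfModOf_eq_zero_forall_le [LocallyPathConnectedSpace T] (hp : 1 < p)
    (hD : IsDoubling μ (c : ℝ≥0∞)) (hP : SupportsPoincare μ CP lP)
    (hd : 0 < diam (univ : Set T)) {m l : ℕ} (hm : 0 < lP → 1 ≤ 2 ^ m * lP)
    (hl : 3 * max lP 1 ≤ 2 ^ l) (hπ : CoverSetup π)
    (hτ : IsDeck π x₀ α₀ τ) (hμt : IsLiftedMeasure π μ μt) {h : T → ℝ≥0∞} (hh : Measurable h)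
    {q : ℝ} (hq : 1 < q) (hint : ∫⁻ x, h x ^ q ∂μ < ⊤)
    {a : ℝ≥0∞} (ha : ∀ ρ : T → ℝ≥0∞, MemF π τ μt p ρ → (∫⁻ x, ρ x ^ p ∂μ) < ⊤ →
      a ≤ ∫⁻ x, h x * ρ x ∂μ) :
    ∃ 𝒩 ⊆ Surfaces μ x₀ α₀, surfModOf μ q 𝒩 = 0 ∧ ∀ S ∈ Surfaces μ x₀ α₀ \ 𝒩,
      a ≤ gradConst c CP m * c ^ l * choquetIntegral μ S h := by
  have : Nonempty T := ⟨x₀⟩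
  have hfinite := hP.isFiniteMeasure
  obtain ⟨s, G, hs, hs0, hG, hGint, hle⟩ := exists_seq_ballAvg_le hD hP hd hq hh hint
  refine ⟨{S ∈ Surfaces μ x₀ α₀ | choquetIntegral μ S G = ⊤}, sep_subset _ _,
    surfModOf_setOf_choquetIntegral_eq_top (one_pos.trans hq) hG hGint fun S hS =>
      measurableSet_and_codimH_lt_top_of_mem_surfaces hS, fun S ⟨hS, hSN⟩ => ?_⟩
  obtain ⟨hSm, hfin⟩ := measurableSet_and_codimH_lt_top_of_mem_surfaces hS
  have hGtop : ∫⁻ y in S, G y ∂(codimMeasure μ) ≠ ⊤ := by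
    rw [← choquetIntegral_eq_lintegral μ hSm hfin hG]
    exact fun h => hSN ⟨hS, h⟩
  rw [choquetIntegral_eq_lintegral μ hSm hfin hh]
  have hev := (tendsto_nhdsWithin_iff.2 ⟨hs0, Eventually.of_forall hs⟩).eventually
    (eventually_le_lintegral_ballAvg (one_pos.trans hp) hD hP hd hm hl hπ hτ hμt hh ha hS)
  have h0 : Tendsto (fun n : ℕ => (2 : ℝ≥0∞)⁻¹ ^ n) atTop (𝓝 0) :=
    ENNReal.tendsto_pow_atTop_nhds_zero_of_lt_one (by simp)
  have hK : gradConst c CP m * (c : ℝ≥0∞) ^ l ≠ ⊤ :=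
    ENNReal.mul_ne_top (gradConst_ne_top _ _ _) (by finiteness)
  have hlim : Tendsto (fun n : ℕ => gradConst c CP m * c ^ l *
      (∫⁻ y in S, h y ∂(codimMeasure μ) + 2⁻¹ ^ n * codimH μ S +
        2⁻¹ ^ n * ∫⁻ y in S, G y ∂(codimMeasure μ))) atTop
      (𝓝 (gradConst c CP m * c ^ l * ∫⁻ y in S, h y ∂(codimMeasure μ))) := by
    have h1 := ENNReal.Tendsto.mul_const h0 (Or.inr hfin.ne)
    have h2 := ENNReal.Tendsto.mul_const h0 (Or.inr hGtop)
    rw [zero_mul] at h1 h2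
    have := ENNReal.Tendsto.const_mul (((tendsto_const_nhds
      (x := ∫⁻ y in S, h y ∂(codimMeasure μ))).add h1).add h2) (Or.inr hK)
    rwa [add_zero, add_zero] at this
  refine ge_of_tendsto hlim (hev.mono fun n hn => hn.trans ?_)
  gcongr
  calc ∫⁻ y in S, ballAvg μ (s n) h y ∂(codimMeasure μ)
      ≤ ∫⁻ y in S, h y + 2⁻¹ ^ n + 2⁻¹ ^ n * G y ∂(codimMeasure μ) :=
        lintegral_mono (hle n)
    _ = _ := by
        rw [lintegral_add_left (hh.add_const _), lintegral_add_left hh, setLIntegral_const,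
          lintegral_const_mul _ hG, codimMeasure_apply μ hSm]

end Capacity

lemma IsDoubling.ne_top {T : Type*} [MetricSpace T] [MeasurableSpace T] [Nonempty T]
    {μ : Measure T} {C : ℝ≥0∞} (hD : IsDoubling μ C) (hd : 0 < diam (univ : Set T)) : C ≠ ⊤ := by
  rintro rfl
  obtain ⟨x⟩ := ‹Nonempty T›
  have h1 := (hD x (diam (univ : Set T) / 4) (by positivity) (by linarith)).1
  have h2 := (hD x (diam (univ : Set T) / 2) (by positivity) (by linarith)).2.2
  rw [show 2 * (diam (univ : Set T) / 4) = diam (univ : Set T) / 2 by ring] at h1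
  simp [ENNReal.top_mul h1.ne'] at h2

end Duality

open Duality in
/-- Inequality (4.2): for `mod_{p*}`-almost every `S ∈ Γ*` one has
`cap_p T ≤ C ∫_S ρ₀^{p-1} dH`; consequently `(C / cap_p T) ρ₀^{p-1}` is weakly
admissible for `mod_{p*} T` when `cap_p T > 0`. -/
theorem statement10 (Cμ : ℝ≥0∞) (CP lP : ℝ) :
    ∃ C : ℝ≥0∞, 0 < C ∧ C < ⊤ ∧
      ∀ (T : Type) [MetricSpace T] [MeasurableSpace T] [BorelSpace T] [CompactSpace T]
        (Tt : Type) [MetricSpace Tt] [MeasurableSpace Tt] [BorelSpace Tt]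
        (μ : Measure T) (μt : Measure Tt) (x₀ : T) (α₀ : Path x₀ x₀)
        (π : Tt → T) (τ : Tt → Tt),
        Standing μ Cμ CP lP x₀ α₀ → CoverSetup π → IsDeck π x₀ α₀ τ →
        IsLiftedMeasure π μ μt →
        ∀ p : ℝ, 1 < p →
          ∀ ρ₀ : T → ℝ≥0∞,
            MemF π τ μt p ρ₀ →
            cap μ p x₀ α₀ = ∫⁻ x, ρ₀ x ^ p ∂μ →
            (∀ ρ : T → ℝ≥0∞, MemF π τ μt p ρ → (∫⁻ x, ρ x ^ p ∂μ) < ⊤ →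
              cap μ p x₀ α₀ ≤ ∫⁻ x, ρ₀ x ^ (p - 1) * ρ x ∂μ) →
            ∃ 𝒩 ⊆ Surfaces μ x₀ α₀, surfModOf μ (p / (p - 1)) 𝒩 = 0 ∧
              (∀ S ∈ Surfaces μ x₀ α₀ \ 𝒩,
                cap μ p x₀ α₀ ≤ C * choquetIntegral μ S fun x => ρ₀ x ^ (p - 1)) ∧
              (0 < cap μ p x₀ α₀ →
                ∀ S ∈ Surfaces μ x₀ α₀ \ 𝒩,
                  1 ≤ choquetIntegral μ S
                    fun x => (C / cap μ p x₀ α₀) * ρ₀ x ^ (p - 1)) := by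
  obtain ⟨m, hm⟩ : ∃ m : ℕ, 0 < lP → 1 ≤ 2 ^ m * lP := by
    obtain ⟨m, hm⟩ := pow_unbounded_of_one_lt lP⁻¹ one_lt_two
    exact ⟨m, fun h => by simpa [h.ne'] using mul_le_mul_of_nonneg_right hm.le h.le⟩
  obtain ⟨l, hl⟩ := pow_unbounded_of_one_lt (3 * max lP 1) one_lt_two
  have hKtop : gradConst Cμ.toNNReal CP m * (Cμ.toNNReal : ℝ≥0∞) ^ l ≠ ⊤ :=
    ENNReal.mul_ne_top (gradConst_ne_top _ _ _) (by finiteness)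
  refine ⟨gradConst Cμ.toNNReal CP m * (Cμ.toNNReal : ℝ≥0∞) ^ l + 1, by positivity,
    ENNReal.add_lt_top.2 ⟨hKtop.lt_top, by simp⟩, ?_⟩
  intro T _ _ _ _ Tt _ _ _ μ μt x₀ α₀ π τ hT hπ hτ hμt p hp ρ₀ hρ₀ hcap hvar
  obtain ⟨hD, hP, -, hgen, f, hf⟩ := hT
  have : Nonempty T := ⟨x₀⟩
  have := nontrivial_of_isGenerator hgen
  have hfinite := hP.isFiniteMeasure
  have hd : 0 < diam (univ : Set T) :=
    diam_pos nontrivial_univ isCompact_univ.isBounded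
  rw [← ENNReal.coe_toNNReal (hD.ne_top hd)] at hD
  have : PathConnectedSpace T :=
    have := hπ.2.2.2
    hπ.2.1.pathConnectedSpace hπ.1.continuous
  have := locallyPathConnectedSpace_of_poincare hD hP hd
  have hp' : 0 < p - 1 := sub_pos.2 hp
  have hh : Measurable fun x => ρ₀ x ^ (p - 1) := hρ₀.1.pow_const _
  have hcaptop := cap_lt_top (one_pos.trans hp) hf (μ := μ)
  obtain ⟨𝒩, h𝒩, hmod, hle⟩ := exists_surfModOf_eq_zero_forall_le hp hD hP hd hm hl.le hπ hτ hμt hh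
    (q := p / (p - 1)) ((one_lt_div hp').2 (by linarith))
    (by simpa only [← ENNReal.rpow_mul, mul_div_cancel₀ _ hp'.ne', ← hcap] using hcaptop) hvar
  have hle' : ∀ S ∈ Surfaces μ x₀ α₀ \ 𝒩, cap μ p x₀ α₀ ≤
      (gradConst Cμ.toNNReal CP m * (Cμ.toNNReal : ℝ≥0∞) ^ l + 1) *
        choquetIntegral μ S fun x => ρ₀ x ^ (p - 1) :=
    fun S hS => (hle S hS).trans (mul_le_mul_left le_self_add _)
  refine ⟨𝒩, h𝒩, hmod, hle', fun hpos S hS => ?_⟩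
  obtain ⟨hSm, hfin⟩ := measurableSet_and_codimH_lt_top_of_mem_surfaces hS.1
  have := hle' S hS
  rw [choquetIntegral_eq_lintegral μ hSm hfin hh] at this
  rw [choquetIntegral_eq_lintegral μ hSm hfin (hh.const_mul _), lintegral_const_mul _ hh,
    div_eq_mul_inv, mul_right_comm, ← div_eq_mul_inv, ENNReal.le_div_iff_mul_le (Or.inl hpos.ne')
      (Or.inl hcaptop.ne), one_mul]
  exact this
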